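/- arXiv:1403.3027 — 3 statements merged into one kernel-verified Lean document; each statement's English description precedes it below -/
import Mathlib

section
/- (Newton's theorem.) Let ρ ∈ L¹(ℝ³) be nonnegative and spherically symmetric (ρ(x) depends only on |x|). Then for every x ∈ ℝ³ with x ≠ 0: ∫_{ℝ³} ρ(y) |x−y|^{-1} dy = |x|^{-1} ∫_{|y| ≤ |x|} ρ(y) dy + ∫_{|y| > |x|} ρ(y) |y|^{-1} dy. In particular, ∫_{ℝ³} ρ(y)|x−y|^{-1} dy ≤ |x|^{-1} ‖ρ‖_{L¹(ℝ³)}. -/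
open MeasureTheory

noncomputable section

/-- Physical space `ℝ³`. -/
abbrev R3 := EuclideanSpace ℝ (Fin 3)

/-- A real function on `ℝ³` is spherically symmetric if it depends only on `|x|`. -/
def SphSym (ρ : R3 → ℝ) : Prop := ∀ x y : R3, ‖x‖ = ‖y‖ → ρ x = ρ y

/-!
By Archimedes' hat-box theorem, the coordinate along the axis through `x` is uniformly distributed
on `(-r, r)` over the sphere `|y| = r`. With `a = |x|`, the law of cosines therefore gives the mean
of `1 / |x - y|` over that sphere as
`(2r)⁻¹ ∫_{-r}^{r} (r² + a² - 2az)^{-1/2} dz = ((a + r) - |a - r|) / (2ar) = 1 / max a r`.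
Hence the measures `|x - y|⁻¹ dy` and `(max |x| |y|)⁻¹ dy` have the same image under `y ↦ |y|`, so
radial functions cannot tell them apart.
-/

open Module (finrank)
open Set Real
open scoped ENNReal

section PolarDecomposition

variable {E : Type*} [NormedAddCommGroup E] [NormedSpace ℝ E] [FiniteDimensional ℝ E]
  [MeasurableSpace E] [BorelSpace E] [Nontrivial E] (μ : Measure E) [μ.IsAddHaarMeasure]

lemma map_norm_addHaar :
    μ.map (‖·‖) = μ.toSphere univ • (Measure.volumeIoiPow (finrank ℝ E - 1)).map Subtype.val := by
  have hnorm : (‖·‖) ∘ (Subtype.val : ({0}ᶜ : Set E) → E) =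
      Subtype.val ∘ Prod.snd ∘ homeomorphUnitSphereProd E := by
    ext y
    simp
  conv_lhs => rw [← restrict_compl_singleton (μ := μ) 0,
    ← map_comap_subtype_coe (measurableSet_singleton 0).compl,
    Measure.map_map measurable_norm measurable_subtype_coe, hnorm]
  rw [← Measure.map_map measurable_subtype_coe (by fun_prop), ← Measure.map_map measurable_snd
    (by fun_prop), μ.measurePreserving_homeomorphUnitSphereProd.map_eq, Measure.map_snd_prod,
    Measure.map_smul]

lemma lintegral_fun_norm_addHaar {f : ℝ → ℝ≥0∞} (hf : Measurable f) :
    ∫⁻ y, f ‖y‖ ∂μ = finrank ℝ E * μ (Metric.ball 0 1) *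
      ∫⁻ r in Ioi 0, ENNReal.ofReal (r ^ (finrank ℝ E - 1)) * f r := by
  rw [← lintegral_map hf measurable_norm, map_norm_addHaar, lintegral_smul_measure,
    lintegral_map hf measurable_subtype_coe, Measure.volumeIoiPow,
    lintegral_withDensity_eq_lintegral_mul _ (by fun_prop) (by fun_prop),
    μ.toSphere_apply_univ, smul_eq_mul, ← lintegral_subtype_comap measurableSet_Ioi]
  rfl

variable {μ} in
lemma aestronglyMeasurable_map_norm_of_comp_norm {F : Type*} [TopologicalSpace F] {f : ℝ → F}
    (hf : AEStronglyMeasurable (fun y => f ‖y‖) μ) :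
    AEStronglyMeasurable f (μ.map (‖·‖)) := by
  rw [map_norm_addHaar]
  refine AEStronglyMeasurable.smul_measure ?_ _
  rw [(MeasurableEmbedding.subtype_coe measurableSet_Ioi).aestronglyMeasurable_map_iff]
  refine AEStronglyMeasurable.of_comp_snd (μ := μ.toSphere) ?_ μ.toSphere_ne_zero
  rw [← μ.measurePreserving_homeomorphUnitSphereProd.aestronglyMeasurable_comp_iff
    (Homeomorph.measurableEmbedding _)]
  rw [← restrict_compl_singleton (μ := μ) 0,
    ← map_comap_subtype_coe (measurableSet_singleton 0).compl] at hf
  simpa [Function.comp_def] using hf.comp_measurable measurable_subtype_coe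

end PolarDecomposition

section HatBox

lemma lintegral_norm_coord_succ {n : ℕ} (i : Fin (n + 1)) {H : ℝ → ℝ → ℝ≥0∞}
    (hH : Measurable (Function.uncurry H)) :
    ∫⁻ y : EuclideanSpace ℝ (Fin (n + 1)), H ‖y‖ (y i) =
      ∫⁻ z : ℝ, ∫⁻ p : EuclideanSpace ℝ (Fin n), H (√(z ^ 2 + ‖p‖ ^ 2)) z := by
  rw [← (PiLp.volume_preserving_toLp (Fin (n + 1))).lintegral_comp_emb
      (MeasurableEquiv.toLp 2 _).measurableEmbedding,
    ← (volume_preserving_piFinSuccAbove (fun _ => ℝ) i).symm.lintegral_comp_emb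
      (MeasurableEquiv.measurableEmbedding _), Measure.volume_eq_prod, lintegral_prod]
  · refine lintegral_congr fun z => ?_
    rw [← (PiLp.volume_preserving_toLp (Fin n)).lintegral_comp_emb
      (MeasurableEquiv.toLp 2 _).measurableEmbedding]
    refine lintegral_congr fun p => ?_
    simp [EuclideanSpace.norm_eq, Fin.sum_univ_succAbove _ i, sq_sqrt, Finset.sum_nonneg,
      sq_nonneg]
  · exact (hH.comp (f := fun w => (‖WithLp.toLp 2 _‖, _)) (by fun_prop)).aemeasurable

lemma image_sqrt_sq_add_sq_Ioi (z : ℝ) : (fun s => √(z ^ 2 + s ^ 2)) '' Ioi 0 = Ioi |z| := by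
  ext r
  simp only [mem_image, mem_Ioi]
  constructor
  · rintro ⟨s, hs, rfl⟩
    exact lt_sqrt_of_sq_lt (by rw [sq_abs]; nlinarith)
  · intro hr
    have hsq : z ^ 2 < r ^ 2 := sq_lt_sq.2 (hr.trans_le (le_abs_self r))
    refine ⟨√(r ^ 2 - z ^ 2), sqrt_pos.2 (by linarith), ?_⟩
    rw [sq_sqrt (by linarith), add_sub_cancel, sqrt_sq (by linarith [abs_nonneg z])]

lemma lintegral_Ioi_mul_comp_sqrt_sq_add_sq (z : ℝ) (f : ℝ → ℝ≥0∞) :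
    ∫⁻ s in Ioi 0, ENNReal.ofReal s * f (√(z ^ 2 + s ^ 2)) =
      ∫⁻ r in Ioi |z|, ENNReal.ofReal r * f r := by
  have hderiv : ∀ s ∈ Ioi (0 : ℝ),
      HasDerivWithinAt (fun s => √(z ^ 2 + s ^ 2)) (s / √(z ^ 2 + s ^ 2)) (Ioi 0) s := by
    intro s hs
    have hpos : z ^ 2 + s ^ 2 ≠ 0 := (add_pos_of_nonneg_of_pos (sq_nonneg z) (pow_pos hs 2)).ne'
    refine ((((hasDerivAt_pow 2 s).const_add (z ^ 2)).sqrt hpos).congr_deriv ?_).hasDerivWithinAt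
    field_simp
    simp
  have hmono : MonotoneOn (fun s => √(z ^ 2 + s ^ 2)) (Ioi 0) := by
    intro s (hs : 0 < s) t _ hst
    dsimp only
    gcongr
  rw [← image_sqrt_sq_add_sq_Ioi,
    lintegral_image_eq_lintegral_deriv_mul_of_monotoneOn measurableSet_Ioi hderiv hmono]
  refine setLIntegral_congr_fun measurableSet_Ioi fun s (hs : 0 < s) => ?_
  have hsqrt : 0 < √(z ^ 2 + s ^ 2) := by positivity
  rw [← mul_assoc, ← ENNReal.ofReal_mul (by positivity), div_mul_cancel₀ _ hsqrt.ne']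

lemma lintegral_lintegral_Ioi_abs {H : ℝ → ℝ → ℝ≥0∞} (hH : Measurable (Function.uncurry H)) :
    ∫⁻ z, ∫⁻ r in Ioi |z|, H r z = ∫⁻ r in Ioi 0, ∫⁻ z in Ioo (-r) r, H r z := by
  let cone : Set (ℝ × ℝ) := {p | |p.2| < p.1}
  let K : ℝ → ℝ → ℝ≥0∞ := fun r z => cone.indicator (Function.uncurry H) (r, z)
  have hK : Measurable (Function.uncurry K) :=
    hH.indicator (measurableSet_lt (by fun_prop) (by fun_prop))
  have hz (z : ℝ) : ∫⁻ r in Ioi |z|, H r z = ∫⁻ r, K r z := by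
    rw [← lintegral_indicator measurableSet_Ioi]
    rfl
  have hr (r : ℝ) : ∫⁻ z in Ioo (-r) r, H r z = ∫⁻ z, K r z := by
    rw [← lintegral_indicator measurableSet_Ioo]
    simp only [indicator, mem_Ioo, ← abs_lt]
    rfl
  simp only [hz, hr]
  rw [lintegral_lintegral_swap (f := fun z r => K r z) (hK.comp measurable_swap).aemeasurable,
    setLIntegral_eq_of_support_subset]
  refine Function.support_subset_iff'.2 fun r hneg => ?_
  rw [← hr, Ioo_eq_empty (by rw [mem_Ioi, not_lt] at hneg; linarith), setLIntegral_empty]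

lemma lintegral_norm_coord_three (i : Fin 3) {H : ℝ → ℝ → ℝ≥0∞}
    (hH : Measurable (Function.uncurry H)) :
    ∫⁻ y : EuclideanSpace ℝ (Fin 3), H ‖y‖ (y i) =
      ENNReal.ofReal (2 * π) *
        ∫⁻ r in Ioi 0, ENNReal.ofReal r * ∫⁻ z in Ioo (-r) r, H r z := by
  have hmul : Measurable (Function.uncurry fun r z => ENNReal.ofReal r * H r z) :=
    measurable_fst.ennreal_ofReal.mul hH
  have hcircle : (finrank ℝ (EuclideanSpace ℝ (Fin 2)) : ℝ≥0∞) *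
      volume (Metric.ball (0 : EuclideanSpace ℝ (Fin 2)) 1) = ENNReal.ofReal (2 * π) := by
    simp [ENNReal.ofReal_mul]
  calc ∫⁻ y : EuclideanSpace ℝ (Fin 3), H ‖y‖ (y i)
    _ = ∫⁻ z, ∫⁻ p : EuclideanSpace ℝ (Fin 2), H (√(z ^ 2 + ‖p‖ ^ 2)) z :=
      lintegral_norm_coord_succ i hH
    _ = ∫⁻ z, ENNReal.ofReal (2 * π) *
          ∫⁻ s in Ioi 0, ENNReal.ofReal s * H (√(z ^ 2 + s ^ 2)) z := by
      refine lintegral_congr fun z => ?_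
      rw [lintegral_fun_norm_addHaar volume (f := fun s => H (√(z ^ 2 + s ^ 2)) z)
        (hH.comp (f := fun s => (_, z)) (by fun_prop)), hcircle]
      simp
    _ = ENNReal.ofReal (2 * π) * ∫⁻ z, ∫⁻ r in Ioi |z|, ENNReal.ofReal r * H r z := by
      rw [lintegral_const_mul' _ _ ENNReal.ofReal_ne_top]
      exact congrArg _ <| lintegral_congr fun z =>
        lintegral_Ioi_mul_comp_sqrt_sq_add_sq z (H · z)
    _ = ENNReal.ofReal (2 * π) *
          ∫⁻ r in Ioi 0, ENNReal.ofReal r * ∫⁻ z in Ioo (-r) r, H r z := by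
      rw [lintegral_lintegral_Ioi_abs hmul]
      exact congrArg _ <| lintegral_congr fun r =>
        lintegral_const_mul' _ _ ENNReal.ofReal_ne_top

end HatBox

section SphericalMean

lemma lintegral_Ioo_deriv_of_nonneg {g g' : ℝ → ℝ} {a b : ℝ} (hab : a ≤ b)
    (hg : ContinuousOn g (Icc a b)) (hderiv : ∀ t ∈ Ioo a b, HasDerivAt g (g' t) t)
    (hnonneg : ∀ t ∈ Ioo a b, 0 ≤ g' t) :
    ∫⁻ t in Ioo a b, ENNReal.ofReal (g' t) = ENNReal.ofReal (g b - g a) := by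
  have hint := intervalIntegral.integrableOn_deriv_of_nonneg hg hderiv hnonneg
  rw [← ofReal_integral_eq_lintegral_ofReal (hint.mono_set Ioo_subset_Ioc_self)
    ((ae_restrict_mem measurableSet_Ioo).mono hnonneg), ← integral_Ioc_eq_integral_Ioo,
    ← intervalIntegral.integral_of_le hab,
    intervalIntegral.integral_eq_sub_of_hasDerivAt_of_le hab hg hderiv
      ((intervalIntegrable_iff_integrableOn_Ioc_of_le hab).2 hint)]

lemma lintegral_inv_sqrt_law_of_cosines {a r : ℝ} (ha : 0 < a) (hr : 0 < r) :
    ∫⁻ z in Ioo (-r) r, ENNReal.ofReal (√(r ^ 2 + a ^ 2 - 2 * a * z))⁻¹ =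
      ENNReal.ofReal (2 * r / max a r) := by
  have hderiv : ∀ z ∈ Ioo (-r) r, HasDerivAt (fun z => -(√(r ^ 2 + a ^ 2 - 2 * a * z) / a))
      (√(r ^ 2 + a ^ 2 - 2 * a * z))⁻¹ z := by
    intro z hz
    have hpos : 0 < r ^ 2 + a ^ 2 - 2 * a * z := by
      nlinarith [sq_nonneg (r - a), mul_pos ha (sub_pos.2 hz.2)]
    have hsqrt := (sqrt_pos.2 hpos).ne'
    refine ((((hasDerivAt_id z).const_mul (2 * a)).const_sub (r ^ 2 + a ^ 2)).sqrt
      hpos.ne' |>.div_const a).neg.congr_deriv ?_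
    simp only [id]
    field_simp
  have hnear : √(r ^ 2 + a ^ 2 - 2 * a * r) = |a - r| := by
    rw [← sqrt_sq_eq_abs]
    ring_nf
  have hfar : √(r ^ 2 + a ^ 2 - 2 * a * -r) = a + r := by
    rw [← sqrt_sq (by positivity : 0 ≤ a + r)]
    ring_nf
  rw [lintegral_Ioo_deriv_of_nonneg (by linarith) (by fun_prop) hderiv
    fun z _ => inv_nonneg.2 (sqrt_nonneg _), hnear, hfar]
  congr 1
  rcases le_total a r with h | h
  · rw [max_eq_right h, abs_of_nonpos (by linarith)]
    field_simp
    ring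
  · rw [max_eq_left h, abs_of_nonneg (by linarith)]
    field_simp
    ring

lemma norm_single_sub {ι : Type*} [Fintype ι] [DecidableEq ι] (i : ι) (a : ℝ)
    (y : EuclideanSpace ℝ ι) :
    ‖EuclideanSpace.single i a - y‖ = √(‖y‖ ^ 2 + a ^ 2 - 2 * a * y i) := by
  rw [← sqrt_sq (norm_nonneg (_ - y)), norm_sub_sq_real]
  congr 1
  simp only [PiLp.norm_single, norm_eq_abs, sq_abs, EuclideanSpace.inner_single_left, ringHom_apply]
  ring

lemma lintegral_mul_inv_norm_single_sub {G : ℝ → ℝ≥0∞} (hG : Measurable G) (i : Fin 3) {a : ℝ}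
    (ha : 0 < a) :
    ∫⁻ y : EuclideanSpace ℝ (Fin 3), G ‖y‖ * ENNReal.ofReal ‖EuclideanSpace.single i a - y‖⁻¹ =
      ∫⁻ y : EuclideanSpace ℝ (Fin 3), G ‖y‖ * ENNReal.ofReal (max a ‖y‖)⁻¹ := by
  simp only [norm_single_sub]
  rw [lintegral_norm_coord_three i
      (H := fun r z => G r * ENNReal.ofReal (√(r ^ 2 + a ^ 2 - 2 * a * z))⁻¹)
      (by unfold Function.uncurry; fun_prop),
    lintegral_norm_coord_three i (H := fun r _ => G r * ENNReal.ofReal (max a r)⁻¹)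
      (by unfold Function.uncurry; fun_prop)]
  congr 1
  refine setLIntegral_congr_fun measurableSet_Ioi fun r (hr : 0 < r) => ?_
  rw [lintegral_const_mul _ (by fun_prop), lintegral_const_mul _ (by fun_prop),
    lintegral_inv_sqrt_law_of_cosines ha hr, setLIntegral_const, volume_Ioo,
    ← ENNReal.ofReal_mul (by positivity)]
  ring_nf

end SphericalMean

section MaxKernel

variable {E : Type*} [NormedAddCommGroup E] [MeasurableSpace E]
  {F : Type*} [NormedAddCommGroup F] [NormedSpace ℝ F]
  {μ : Measure E} {ρ : E → F} {a : ℝ}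

lemma norm_integral_inv_max_norm_smul_le (hρ : Integrable ρ μ) (ha : 0 < a) :
    ‖∫ y, (max a ‖y‖)⁻¹ • ρ y ∂μ‖ ≤ a⁻¹ * ∫ y, ‖ρ y‖ ∂μ := by
  rw [← integral_const_mul]
  refine norm_integral_le_of_norm_le (hρ.norm.const_mul _) (.of_forall fun y => ?_)
  rw [norm_smul, norm_of_nonneg (by positivity)]
  gcongr
  exact le_max_left _ _

variable [OpensMeasurableSpace E]

lemma integrable_inv_max_norm_smul (hρ : Integrable ρ μ) (ha : 0 < a) :
    Integrable (fun y => (max a ‖y‖)⁻¹ • ρ y) μ := by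
  refine hρ.bdd_smul a⁻¹ (by fun_prop) (.of_forall fun y => ?_)
  rw [norm_of_nonneg (by positivity)]
  gcongr
  exact le_max_left _ _

lemma integral_inv_max_norm_smul (hρ : Integrable ρ μ) (ha : 0 < a) :
    ∫ y, (max a ‖y‖)⁻¹ • ρ y ∂μ =
      a⁻¹ • (∫ y in {y | ‖y‖ ≤ a}, ρ y ∂μ) + ∫ y in {y | a < ‖y‖}, ‖y‖⁻¹ • ρ y ∂μ := by
  have hball : MeasurableSet {y : E | ‖y‖ ≤ a} := measurableSet_le (by fun_prop) (by fun_prop)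
  have hcompl : {y : E | ‖y‖ ≤ a}ᶜ = {y | a < ‖y‖} := by
    ext y
    simp
  rw [← integral_add_compl hball (integrable_inv_max_norm_smul hρ ha), hcompl, ← integral_smul]
  congr 1
  · refine setIntegral_congr_fun hball fun y (hy : ‖y‖ ≤ a) => ?_
    simp only [max_eq_left hy]
  · refine setIntegral_congr_fun (hcompl ▸ hball.compl) fun y (hy : a < ‖y‖) => ?_
    simp only [max_eq_right hy.le]

end MaxKernel

section Newton

variable {V : Type*} [NormedAddCommGroup V] [InnerProductSpace ℝ V] [FiniteDimensional ℝ V]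

lemma exists_linearIsometryEquiv_apply_eq_single {n : ℕ} (hV : finrank ℝ V = n)
    (i : Fin n) (x : V) :
    ∃ e : V ≃ₗᵢ[ℝ] EuclideanSpace ℝ (Fin n), e x = EuclideanSpace.single i ‖x‖ := by
  let φ := ((stdOrthonormalBasis ℝ V).reindex (finCongr hV)).repr
  exact ⟨φ.trans (Submodule.reflection _), Submodule.reflection_sub (v := φ x) (by simp)⟩

variable [MeasurableSpace V] [BorelSpace V]

lemma lintegral_mul_inv_norm_sub (hV : finrank ℝ V = 3) {G : ℝ → ℝ≥0∞} (hG : Measurable G)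
    (x : V) :
    ∫⁻ y : V, G ‖y‖ * ENNReal.ofReal ‖x - y‖⁻¹ =
      ∫⁻ y : V, G ‖y‖ * ENNReal.ofReal (max ‖x‖ ‖y‖)⁻¹ := by
  rcases eq_or_ne x 0 with rfl | hx
  · simp
  obtain ⟨e, he⟩ := exists_linearIsometryEquiv_apply_eq_single hV 0 x
  have htransfer (K : EuclideanSpace ℝ (Fin 3) → ℝ≥0∞) : ∫⁻ y, K (e y) = ∫⁻ y, K y :=
    e.measurePreserving.lintegral_comp_emb e.toHomeomorph.measurableEmbedding K
  have haxis := lintegral_mul_inv_norm_single_sub hG 0 (norm_pos_iff.2 hx)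
  rw [← htransfer, ← htransfer] at haxis
  simpa only [← he, ← map_sub, e.norm_map] using haxis

lemma map_norm_withDensity_inv_norm_sub (hV : finrank ℝ V = 3) (x : V) :
    (volume.withDensity fun y : V => ENNReal.ofReal ‖x - y‖⁻¹).map (‖·‖) =
      (volume.withDensity fun y : V => ENNReal.ofReal (max ‖x‖ ‖y‖)⁻¹).map (‖·‖) := by
  refine Measure.ext_of_lintegral _ fun G hG => ?_
  rw [lintegral_map hG measurable_norm, lintegral_map hG measurable_norm,
    lintegral_withDensity_eq_lintegral_mul _ (by fun_prop) (by fun_prop),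
    lintegral_withDensity_eq_lintegral_mul _ (by fun_prop) (by fun_prop)]
  simpa only [Pi.mul_apply, mul_comm] using lintegral_mul_inv_norm_sub hV hG x

variable {F : Type*} [NormedAddCommGroup F] [NormedSpace ℝ F] {ρ : V → F}

lemma integral_inv_norm_sub_smul (hV : finrank ℝ V = 3) (hρ : AEStronglyMeasurable ρ)
    (hradial : ρ.FactorsThrough norm) (x : V) :
    ∫ y, ‖x - y‖⁻¹ • ρ y = ∫ y, (max ‖x‖ ‖y‖)⁻¹ • ρ y := by
  have : Nontrivial V := Module.nontrivial_of_finrank_pos (R := ℝ) (by lia)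
  obtain ⟨f, rfl⟩ := (Function.factorsThrough_iff ρ).1 hradial
  have hf := aestronglyMeasurable_map_norm_of_comp_norm hρ
  have hpush (k : V → ℝ) (hk : Measurable k) (hk0 : ∀ y, 0 ≤ k y) : ∫ y, k y • f ‖y‖ =
      ∫ r, f r ∂(volume.withDensity fun y => ENNReal.ofReal (k y)).map (‖·‖) := by
    rw [integral_map measurable_norm.aemeasurable
      (hf.mono_ac ((withDensity_absolutelyContinuous _ _).map measurable_norm)),
      integral_withDensity_eq_integral_toReal_smul (by fun_prop) (by simp)]
    simp only [ENNReal.toReal_ofReal (hk0 _)]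
  simp only [Function.comp_apply]
  rw [hpush _ (by fun_prop) fun y => by positivity, map_norm_withDensity_inv_norm_sub hV,
    ← hpush _ (by fun_prop) fun y => by positivity]

theorem newtons_theorem_general [CompleteSpace F] (hV : finrank ℝ V = 3) (hρ : Integrable ρ)
    (hradial : ρ.FactorsThrough norm) {x : V} (hx : x ≠ 0) :
    ∫ y, ‖x - y‖⁻¹ • ρ y =
        ‖x‖⁻¹ • (∫ y in {y | ‖y‖ ≤ ‖x‖}, ρ y) + ∫ y in {y | ‖x‖ < ‖y‖}, ‖y‖⁻¹ • ρ y ∧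
      ‖∫ y, ‖x - y‖⁻¹ • ρ y‖ ≤ ‖x‖⁻¹ * ∫ y, ‖ρ y‖ := by
  rw [integral_inv_norm_sub_smul hV hρ.aestronglyMeasurable hradial]
  exact ⟨integral_inv_max_norm_smul hρ (norm_pos_iff.2 hx),
    norm_integral_inv_max_norm_smul_le hρ (norm_pos_iff.2 hx)⟩

end Newton

/-- **Newton's theorem**: for nonnegative, integrable, spherically symmetric `ρ` and
`x ≠ 0`, `∫ ρ(y)|x−y|⁻¹ dy = |x|⁻¹ ∫_{|y|≤|x|} ρ(y) dy + ∫_{|y|>|x|} ρ(y)|y|⁻¹ dy`;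
in particular `∫ ρ(y)|x−y|⁻¹ dy ≤ |x|⁻¹ ‖ρ‖_{L¹}`. -/
theorem newtons_theorem (ρ : R3 → ℝ) (hint : Integrable ρ) (hpos : ∀ x, 0 ≤ ρ x)
    (hsph : SphSym ρ) :
    ∀ x : R3, x ≠ 0 →
      (∫ y : R3, ρ y / ‖x - y‖) =
          ‖x‖⁻¹ * (∫ y in {y : R3 | ‖y‖ ≤ ‖x‖}, ρ y) +
            ∫ y in {y : R3 | ‖x‖ < ‖y‖}, ρ y / ‖y‖ ∧
      (∫ y : R3, ρ y / ‖x - y‖) ≤ ‖x‖⁻¹ * ∫ y : R3, ρ y := by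
  intro x hx
  have hnewton := newtons_theorem_general finrank_euclideanSpace_fin hint (hsph · ·) hx
  simp only [smul_eq_mul, ← div_eq_inv_mul, norm_of_nonneg (hpos _)] at hnewton ⊢
  exact hnewton.imp_right (le_norm_self _).trans
end
end

section
/- (Virial identity for the Coulomb potential.) Let ρ : ℝ³ → ℝ be smooth and compactly supported, and define V(x) = −∫_{ℝ³} ρ(y) |x−y|^{-1} dy. Then ∫_{ℝ³} ρ(x) (x · ∇V(x)) dx = −(1/2) ∫_{ℝ³} ρ(x) V(x) dx. -/
open MeasureTheory

noncomputable section

/-- The (attractive) Coulomb potential of a density `ρ`: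
`V(x) = −∫ ρ(y)|x−y|⁻¹ dy`. -/
def coulPot (ρ : R3 → ℝ) (x : R3) : ℝ := -∫ y : R3, ρ y / ‖x - y‖

/-!
For an even kernel `K`, homogeneous of degree `s`, the interaction energy
`F t = ∫ ρ(x) (ρ ⋆ K)(t x) dx` of `ρ` with a dilate of its own potential satisfies
`F t = t ^ s * F t⁻¹`: rescale both variables, then exchange the two charges. Differentiating at
`t = 1` gives `F' 1 = s * F 1 - F' 1`, and `F' 1 = ∫ ρ(x) (x · ∇(ρ ⋆ K)(x)) dx` is the virial.
The Coulomb kernel `-‖z‖⁻¹` has degree `s = -1`.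
-/

open Set Topology
open ContinuousLinearMap (lsmul lsmul_apply)
open Module (finrank)
open scoped Convolution

section ParametricIntegral

variable {X G : Type*} [TopologicalSpace X] [T2Space X] [MeasurableSpace X] [BorelSpace X]
  [NormedAddCommGroup G] [NormedSpace ℝ G] [SecondCountableTopologyEither X G]
  {μ : Measure X} [IsFiniteMeasureOnCompacts μ]

lemma hasDerivAt_integral_of_isCompact {f f' : ℝ → X → G} {k : Set X} (hk : IsCompact k)
    (hfk : ∀ t, ∀ x ∉ k, f t x = 0) (hf : ∀ t, Continuous (f t))
    (hf' : Continuous fun p : ℝ × X => f' p.1 p.2)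
    (hderiv : ∀ t x, HasDerivAt (f · x) (f' t x) t) (t₀ : ℝ) :
    HasDerivAt (fun t => ∫ x, f t x ∂μ) (∫ x, f' t₀ x ∂μ) t₀ := by
  have hf'k (t : ℝ) (x : X) (hx : x ∉ k) : f' t x = 0 := by
    have hzero : (f · x) = fun _ => 0 := funext fun u => hfk u x hx
    exact (hzero ▸ hderiv t x).unique (hasDerivAt_const t 0)
  obtain ⟨C, hC⟩ := ((isCompact_closedBall t₀ 1).prod hk).exists_bound_of_continuousOn
    hf'.continuousOn
  have hbound (x : X) (t : ℝ) (ht : t ∈ Metric.closedBall t₀ 1) :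
      ‖f' t x‖ ≤ k.indicator (fun _ => C) x := by
    by_cases hx : x ∈ k
    · simpa only [indicator_of_mem hx] using hC (t, x) ⟨ht, hx⟩
    · simp only [indicator_of_notMem hx, hf'k t x hx, norm_zero, le_refl]
  have hint : Integrable (f t₀) μ :=
    (hf t₀).integrable_of_hasCompactSupport (.intro hk (hfk t₀))
  have hC_int : Integrable (k.indicator fun _ => C) μ :=
    (integrable_indicator_iff hk.measurableSet).2 (integrableOn_const hk.measure_ne_top)
  exact (hasDerivAt_integral_of_dominated_loc_of_deriv_le
    (Metric.closedBall_mem_nhds t₀ one_pos) (.of_forall fun t => (hf t).aestronglyMeasurable)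
    hint (hf'.comp (.prodMk_right t₀)).aestronglyMeasurable (ae_of_all _ hbound) hC_int
    (ae_of_all _ fun x t _ => hderiv t x)).2

end ParametricIntegral

lemma add_eq_mul_of_eventuallyEq_rpow_mul_comp_inv {F G : ℝ → ℝ} {F' G' s : ℝ}
    (hF : HasDerivAt F F' 1) (hG : HasDerivAt G G' 1)
    (hFG : F =ᶠ[𝓝 1] fun t => t ^ s * G t⁻¹) : F' + G' = s * F 1 := by
  have hrpow : HasDerivAt (fun t : ℝ => t ^ s) s 1 := by
    simpa using Real.hasDerivAt_rpow_const (p := s) (Or.inl (one_ne_zero (α := ℝ)))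
  have hinv : HasDerivAt (fun t : ℝ => t⁻¹) (-1) 1 := by
    simpa using hasDerivAt_inv (one_ne_zero (α := ℝ))
  have hGinv : HasDerivAt (fun t => G t⁻¹) (G' * -1) 1 :=
    HasDerivAt.comp (h₂ := G) 1 (by simpa only [inv_one] using hG) hinv
  have hF' : F' = s * G 1 - G' := by
    simpa [sub_eq_add_neg] using hF.unique ((hrpow.mul hGinv).congr_of_eventuallyEq hFG)
  have hF1 : F 1 = G 1 := by simpa using hFG.self_of_nhds
  rw [hF', hF1, sub_add_cancel]

section Exchange

lemma locallyIntegrable_comp_neg {A F : Type*} [AddGroup A] [TopologicalSpace A]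
    [ContinuousNeg A] [MeasurableSpace A] [MeasurableNeg A] {μ : Measure A} [μ.IsNegInvariant]
    [NormedAddCommGroup F] {K : A → F} (hK : LocallyIntegrable K μ) :
    LocallyIntegrable (fun z => K (-z)) μ := fun x => by
  obtain ⟨u, hu, hKu⟩ := hK (-x)
  exact ⟨-u, continuous_neg.continuousAt hu, hKu.comp_neg⟩

variable {A : Type*} [AddCommGroup A] [TopologicalSpace A] [IsTopologicalAddGroup A]
  [SecondCountableTopology A] [MeasurableSpace A] [BorelSpace A]
  {μ : Measure A} [SFinite μ] [IsFiniteMeasureOnCompacts μ]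
  [μ.IsAddLeftInvariant] [μ.IsNegInvariant] {f g K : A → ℝ}

lemma integrable_mul_mul_sub (hf : Continuous f) (hfc : HasCompactSupport f)
    (hg : Continuous g) (hgc : HasCompactSupport g) (hK : LocallyIntegrable K μ) :
    Integrable (fun p : A × A => f p.1 * (g p.2 * K (p.1 - p.2))) (μ.prod μ) := by
  have hmeas : AEStronglyMeasurable (fun p : A × A => g p.2 * K (p.1 - p.2)) (μ.prod μ) :=
    hg.aestronglyMeasurable.convolution_integrand (lsmul ℝ ℝ) hK.aestronglyMeasurable
  have hsection (x : A) : Integrable (fun y => g y * K (x - y)) μ :=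
    hgc.convolutionExists_left (lsmul ℝ ℝ) hg hK x
  have hKnorm : LocallyIntegrable (fun z => ‖K z‖) μ :=
    hK.mono hK.aestronglyMeasurable.norm (ae_of_all _ fun z => (norm_norm (K z)).le)
  have hcont : Continuous ((fun y => ‖g y‖) ⋆[lsmul ℝ ℝ, μ] fun z => ‖K z‖) :=
    hgc.norm.continuous_convolution_left _ hg.norm hKnorm
  refine (integrable_prod_iff (hf.aestronglyMeasurable.comp_fst.mul hmeas)).2
    ⟨ae_of_all _ fun x => (hsection x).const_mul (f x), ?_⟩
  simp only [Pi.mul_apply, norm_mul, integral_const_mul]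
  exact (hf.norm.mul hcont).integrable_of_hasCompactSupport hfc.norm.mul_right

lemma integral_mul_convolution_eq_integral_mul_convolution_neg
    (hf : Continuous f) (hfc : HasCompactSupport f)
    (hg : Continuous g) (hgc : HasCompactSupport g) (hK : LocallyIntegrable K μ) :
    ∫ x, f x * (g ⋆[lsmul ℝ ℝ, μ] K) x ∂μ =
      ∫ y, g y * (f ⋆[lsmul ℝ ℝ, μ] fun z => K (-z)) y ∂μ := by
  simp only [convolution_def, lsmul_apply, smul_eq_mul, ← integral_const_mul, neg_sub]
  rw [integral_integral_swap (integrable_mul_mul_sub hf hfc hg hgc hK)]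
  simp only [mul_left_comm]

end Exchange

/-- Positive homogeneity of real degree `s`, the scaling law of an interaction kernel. The condition
at `x = 0` is part of the definition, so that `f 0 = 0` unless `s = 0`. -/
def IsPosHomogeneous {E : Type*} [SMul ℝ E] (f : E → ℝ) (s : ℝ) : Prop :=
  ∀ ⦃t : ℝ⦄, 0 < t → ∀ x, f (t • x) = t ^ s * f x

section Dilation

variable {E : Type*} [NormedAddCommGroup E] [NormedSpace ℝ E] [MeasurableSpace E] [BorelSpace E]

lemma hasDerivAt_integral_smul_comp_smul {G : Type*} [NormedAddCommGroup G] [NormedSpace ℝ G]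
    [SecondCountableTopologyEither E G] {μ : Measure E} [IsFiniteMeasureOnCompacts μ]
    {f : E → ℝ} {V : E → G} (hf : Continuous f) (hfc : HasCompactSupport f)
    (hV : ContDiff ℝ 1 V) (t : ℝ) :
    HasDerivAt (fun t : ℝ => ∫ x, f x • V (t • x) ∂μ) (∫ x, f x • fderiv ℝ V (t • x) x ∂μ) t := by
  have hderiv_cont : Continuous fun p : ℝ × E => f p.2 • fderiv ℝ V (p.1 • p.2) p.2 :=
    (hf.comp continuous_snd).smul
      (((hV.continuous_fderiv one_ne_zero).comp continuous_smul).clm_apply continuous_snd)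
  refine hasDerivAt_integral_of_isCompact (f := fun t x => f x • V (t • x))
    (f' := fun t x => f x • fderiv ℝ V (t • x) x) hfc
    (fun t x hx => ?_) (fun t => hf.smul (hV.continuous.comp (continuous_const_smul t)))
    hderiv_cont (fun t x => ?_) t
  · rw [image_eq_zero_of_notMem_tsupport hx, zero_smul]
  · have hline : HasDerivAt (fun t : ℝ => t • x) x t := by
      simpa using (hasDerivAt_id t).smul_const x
    exact ((hV.differentiable one_ne_zero _).hasFDerivAt.comp_hasDerivAt t hline).const_smul (f x)

variable [FiniteDimensional ℝ E] {μ : Measure E} [μ.IsAddHaarMeasure] {f g K : E → ℝ} {s t : ℝ}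

lemma convolution_comp_inv_smul (hK : IsPosHomogeneous K s) (ht : 0 < t) (f : E → ℝ) (x : E) :
    ((fun y => f (t⁻¹ • y)) ⋆[lsmul ℝ ℝ, μ] K) x =
      t ^ finrank ℝ E * t ^ s * (f ⋆[lsmul ℝ ℝ, μ] K) (t⁻¹ • x) := by
  have hker (y : E) : K (x - y) = t ^ s * K (t⁻¹ • x - t⁻¹ • y) := by
    rw [← hK ht, ← smul_sub, smul_inv_smul₀ ht.ne']
  simp only [convolution_def, lsmul_apply, smul_eq_mul, hker, mul_left_comm (f _),
    integral_const_mul]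
  rw [Measure.integral_comp_inv_smul_of_nonneg μ (fun y => f y * K (t⁻¹ • x - y)) ht.le,
    smul_eq_mul, mul_left_comm, mul_assoc]

lemma integral_mul_convolution_smul (hK : LocallyIntegrable K μ) (hKs : IsPosHomogeneous K s)
    (hf : Continuous f) (hfc : HasCompactSupport f) (hg : Continuous g)
    (hgc : HasCompactSupport g) (ht : 0 < t) :
    ∫ x, f x * (g ⋆[lsmul ℝ ℝ, μ] K) (t • x) ∂μ =
      t ^ s * ∫ y, g y * (f ⋆[lsmul ℝ ℝ, μ] fun z => K (-z)) (t⁻¹ • y) ∂μ := by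
  have hKs_neg : IsPosHomogeneous (fun z => K (-z)) s := fun u hu z => by
    simpa only [smul_neg] using hKs hu (-z)
  have hpow : t ^ finrank ℝ E ≠ 0 := (pow_pos ht _).ne'
  calc ∫ x, f x * (g ⋆[lsmul ℝ ℝ, μ] K) (t • x) ∂μ
      = ∫ x, f (t⁻¹ • t • x) * (g ⋆[lsmul ℝ ℝ, μ] K) (t • x) ∂μ := by
        simp only [inv_smul_smul₀ ht.ne']
    _ = (t ^ finrank ℝ E)⁻¹ * ∫ x, f (t⁻¹ • x) * (g ⋆[lsmul ℝ ℝ, μ] K) x ∂μ :=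
        Measure.integral_comp_smul_of_nonneg μ
          (fun x => f (t⁻¹ • x) * (g ⋆[lsmul ℝ ℝ, μ] K) x) t (hR := ht.le)
    _ = (t ^ finrank ℝ E)⁻¹ *
          ∫ y, g y * ((fun x => f (t⁻¹ • x)) ⋆[lsmul ℝ ℝ, μ] fun z => K (-z)) y ∂μ := by
        rw [integral_mul_convolution_eq_integral_mul_convolution_neg
          (f := fun x => f (t⁻¹ • x)) (by fun_prop) (hfc.comp_smul (inv_ne_zero ht.ne')) hg hgc hK]
    _ = t ^ s * ∫ y, g y * (f ⋆[lsmul ℝ ℝ, μ] fun z => K (-z)) (t⁻¹ • y) ∂μ := by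
        simp only [convolution_comp_inv_smul hKs_neg ht f, mul_left_comm (g _),
          integral_const_mul]
        rw [mul_assoc, inv_mul_cancel_left₀ hpow]

lemma integral_virial_add_integral_virial (hK : LocallyIntegrable K μ)
    (hKs : IsPosHomogeneous K s) (hf : ContDiff ℝ 1 f) (hfc : HasCompactSupport f)
    (hg : ContDiff ℝ 1 g) (hgc : HasCompactSupport g) :
    ∫ x, f x * fderiv ℝ (g ⋆[lsmul ℝ ℝ, μ] K) x x ∂μ +
        ∫ x, g x * fderiv ℝ (f ⋆[lsmul ℝ ℝ, μ] fun z => K (-z)) x x ∂μ =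
      s * ∫ x, f x * (g ⋆[lsmul ℝ ℝ, μ] K) x ∂μ := by
  have hK_neg : LocallyIntegrable (fun z => K (-z)) μ := locallyIntegrable_comp_neg hK
  have hgK := hasDerivAt_integral_smul_comp_smul (μ := μ) hf.continuous hfc
    (hgc.contDiff_convolution_left (lsmul ℝ ℝ) hg hK) 1
  have hfK := hasDerivAt_integral_smul_comp_smul (μ := μ) hg.continuous hgc
    (hfc.contDiff_convolution_left (lsmul ℝ ℝ) hf hK_neg) 1
  simpa only [one_smul, smul_eq_mul] using add_eq_mul_of_eventuallyEq_rpow_mul_comp_inv hgK hfK <|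
    (lt_mem_nhds one_pos).mono fun t ht =>
      integral_mul_convolution_smul hK hKs hf.continuous hfc hg.continuous hgc ht

theorem coulomb_virial_identity_general {ρ : E → ℝ} (hK : LocallyIntegrable K μ)
    (hKs : IsPosHomogeneous K s) (hK_even : Function.Even K)
    (hρ : ContDiff ℝ 1 ρ) (hρc : HasCompactSupport ρ) :
    ∫ x, ρ x * fderiv ℝ (ρ ⋆[lsmul ℝ ℝ, μ] K) x x ∂μ =
      s / 2 * ∫ x, ρ x * (ρ ⋆[lsmul ℝ ℝ, μ] K) x ∂μ := by
  have hvirial := integral_virial_add_integral_virial hK hKs hρ hρc hρ hρc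
  simp only [hK_even _] at hvirial
  linarith

end Dilation

lemma locallyIntegrable_inv_norm {E : Type*} [NormedAddCommGroup E] [NormedSpace ℝ E]
    [FiniteDimensional ℝ E] [MeasurableSpace E] [BorelSpace E] {μ : Measure E} [μ.IsAddHaarMeasure]
    (hE : 1 < finrank ℝ E) : LocallyIntegrable (fun z : E => ‖z‖⁻¹) μ :=
  locallyIntegrable_of_norm_le_rpow (C := 1) (α := 1) hE.le (by exact_mod_cast hE)
    (ae_of_all _ fun z => by simp [Real.rpow_neg_one]) measurable_norm.inv.aestronglyMeasurable

lemma isPosHomogeneous_neg_inv_norm {E : Type*} [NormedAddCommGroup E] [NormedSpace ℝ E] :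
    IsPosHomogeneous (fun z : E => -‖z‖⁻¹) (-1) :=
  fun t ht z => by
    simp only [norm_smul, Real.norm_of_nonneg ht.le, mul_inv, Real.rpow_neg_one, mul_neg]

lemma even_neg_inv_norm {E : Type*} [SeminormedAddGroup E] :
    Function.Even fun z : E => -‖z‖⁻¹ := fun z => by
  simp only [norm_neg]

lemma coulPot_eq_convolution (ρ : R3 → ℝ) : coulPot ρ = ρ ⋆ fun z => -‖z‖⁻¹ := by
  ext x
  simp [coulPot, convolution_def, div_eq_mul_inv, integral_neg]

/-- **Virial identity for the Coulomb potential** (eq. (4.2)): for smooth compactly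
supported `ρ` and `V = −|·|⁻¹ ⋆ ρ`,
`∫ ρ(x) (x·∇V(x)) dx = −½ ∫ ρ(x) V(x) dx`, where `x·∇V(x)` is the Fréchet derivative of
`V` at `x` applied to the vector `x`. -/
theorem coulomb_virial_identity (ρ : R3 → ℝ) (hsmooth : ContDiff ℝ (⊤ : ℕ∞) ρ)
    (hsupp : HasCompactSupport ρ) :
    (∫ x : R3, ρ x * fderiv ℝ (coulPot ρ) x x) =
      -(1 / 2) * ∫ x : R3, ρ x * coulPot ρ x := by
  rw [coulPot_eq_convolution, ← neg_div]
  exact coulomb_virial_identity_general (locallyIntegrable_inv_norm (by simp)).neg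
    isPosHomogeneous_neg_inv_norm even_neg_inv_norm (hsmooth.of_le (mod_cast le_top)) hsupp
end
end

section
/- (Strichartz-type estimate for the fractional heat semigroup.) Let n ≥ 1, α > 0, ν ≥ 0, b > 0, T > 0 and I = [0,T). Let (q,p,r) be an admissible triplet: 1/q = (n/(2α))(1/r − 1/p), with 1 < r ≤ p, and p < nr/(n−2α) if n > 2α while p < ∞ if n ≤ 2α. Set r₀ = nb/(2α), and assume p > b+1, p < r(b+1), r ≥ r₀ > 1, q > b+1 and ν/(2α) + nb/(2rα) < 1. Then there is a constant C such that for every f ∈ L^{q/(b+1)}(I; L^{p/(b+1)}(ℝⁿ)): ‖ ∫₀ᵗ (−Δ)^{ν/2} S_α(t−s) f(s,·) ds ‖_{L^∞(I; L^r(ℝⁿ))} ≤ C T^{ 1 − nb/(2rα) − ν/(2α) } ‖f‖_{L^{q/(b+1)}(I; L^{p/(b+1)}(ℝⁿ))}. -/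
open MeasureTheory Complex
open scoped FourierTransform ENNReal

noncomputable section

/-- Euclidean space `ℝⁿ`. -/
abbrev Rn (n : ℕ) := EuclideanSpace ℝ (Fin n)

/-- The kernel `K_t^ν = 𝓕⁻¹(|ξ|^ν e^{−t|ξ|^{2α}})` of `(−Δ)^{ν/2} S_α(t)`, where
`S_α(t) = e^{−t(−Δ)^α}` is the fractional heat semigroup. -/
def heatKernel (n : ℕ) (α ν t : ℝ) : Rn n → ℂ :=
  𝓕⁻ fun ξ : Rn n => ((‖ξ‖ ^ ν * Real.exp (-(t * ‖ξ‖ ^ (2 * α))) : ℝ) : ℂ)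

/-- The mixed space-time norm `‖f‖_{L^γ([0,T); L^β(ℝⁿ))}`. -/
def mixedNorm (n : ℕ) (T γ β : ℝ) (f : ℝ → Rn n → ℂ) : ℝ≥0∞ :=
  (∫⁻ s in Set.Ico (0 : ℝ) T, (eLpNorm (f s) (ENNReal.ofReal β) volume) ^ γ) ^ (1 / γ)

/-!
By Minkowski's and Young's inequalities, the `L^r` norm of the Duhamel integral at time `t` is at
most `∫₀ᵗ ‖K_{t-s}‖_{L^m} ‖f(s)‖_{L^c} ds` with `1/m = 1 + 1/r - 1/c` and `c = p/(b+1)`. Scaling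
gives `‖K_t‖_{L^m} = t ^ (-e) ‖K_1‖_{L^m}`, and Hölder's inequality in time, with exponent
`q/(b+1)`, yields the power of `T`, which admissibility brings into the stated form.

It remains to see that `K_1` lies in `L^m`, although its symbol is not smooth at the origin. The
fundamental theorem of calculus writes the symbol as a superposition of indicators of balls,
and each integration by parts in the radius `w` raises the exponent `N` of the layers
`(1 - |ξ / w|²)₊ ^ N`. For large `N` the layer with `w = 1` is as smooth as we like, so its inverse
Fourier transform decays fast; the other layers are dilates of it, and integrating over `w` gives
decay of `K_1` beyond `|x| ^ (-n)`.
-/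

section Convolution

variable {G : Type*} [AddGroup G] [MeasurableSpace G] [MeasurableAdd₂ G] [MeasurableNeg G]
  {μ : Measure G} [SFinite μ] [μ.IsAddLeftInvariant] {f g : G → ℝ≥0∞}

theorem lintegral_lconvolution (hf : AEMeasurable f μ) (hg : AEMeasurable g μ) :
    ∫⁻ x, (f ⋆ₗ[μ] g) x ∂μ = (∫⁻ x, f x ∂μ) * ∫⁻ x, g x ∂μ := by
  simp only [lconvolution_def]
  rw [lintegral_lintegral_swap (by fun_prop), ← lintegral_mul_const'' _ hf]
  refine lintegral_congr fun y => ?_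
  have hgy : AEMeasurable (fun x => g (-y + x)) μ := hg.comp_quasiMeasurePreserving
    (measurePreserving_add_left μ (-y)).quasiMeasurePreserving
  rw [lintegral_const_mul'' _ hgy, lintegral_add_left_eq_self]

variable [μ.IsNegInvariant] {c m r : ℝ}

/- Hölder's inequality applied to
`f y * g z = (f y ^ c * g z ^ m) ^ (1 / r) * (f y ^ c) ^ (1 / c - 1 / r) *
  (g z ^ m) ^ (1 / m - 1 / r)`. -/
theorem lconvolution_le_rpow_mul_rpow (hf : AEMeasurable f μ) (hg : AEMeasurable g μ)
    (hc : 0 < c) (hm : 0 < m) (hr : 0 < r) (hcr : 1 / r ≤ 1 / c) (hmr : 1 / r ≤ 1 / m)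
    (hcmr : 1 / c + 1 / m = 1 + 1 / r) (x : G) :
    (f ⋆ₗ[μ] g) x ≤
      ((fun y => f y ^ c) ⋆ₗ[μ] fun y => g y ^ m) x ^ (1 / r) *
        (∫⁻ y, f y ^ c ∂μ) ^ (1 / c - 1 / r) * (∫⁻ y, g y ^ m ∂μ) ^ (1 / m - 1 / r) := by
  have hroot (a : ℝ≥0∞) {p : ℝ} (hp : 0 < p) (hpr : 1 / r ≤ 1 / p) :
      (a ^ p) ^ (1 / r) * (a ^ p) ^ (1 / p - 1 / r) = a := by
    rw [← ENNReal.rpow_add_of_nonneg _ _ (by positivity) (sub_nonneg.2 hpr),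
      add_sub_cancel, one_div, ENNReal.rpow_rpow_inv hp.ne']
  have hgx : AEMeasurable (fun y => g (-y + x)) μ := by
    simpa [Function.comp_def] using hg.comp_quasiMeasurePreserving
      ((Measure.measurePreserving_neg μ).comp
        (measurePreserving_add_left μ (-x))).quasiMeasurePreserving
  have hshift : ∫⁻ y, g (-y + x) ^ m ∂μ = ∫⁻ y, g y ^ m ∂μ := by
    rw [← lintegral_add_left_eq_self _ x, ← lintegral_neg_eq_self fun y => g y ^ m]
    simp
  have hfc : AEMeasurable (fun y => f y ^ c) μ := by fun_prop
  have hgm : AEMeasurable (fun y => g (-y + x) ^ m) μ := by fun_prop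
  have holder := ENNReal.lintegral_prod_norm_pow_le (μ := μ) Finset.univ
    (f := ![fun y => f y ^ c * g (-y + x) ^ m, fun y => f y ^ c, fun y => g (-y + x) ^ m])
    (p := ![1 / r, 1 / c - 1 / r, 1 / m - 1 / r])
    (by simpa [Fin.forall_fin_succ] using ⟨hfc.mul hgm, hfc, hgm⟩)
    (by simp only [Fin.sum_univ_three, Matrix.cons_val]; linarith)
    (by simpa [Fin.forall_fin_succ] using
      ⟨hr.le, by simpa using hcr, by simpa using hmr⟩)
  simp only [Fin.prod_univ_three, Matrix.cons_val, hshift] at holder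
  refine (lintegral_mono fun y => le_of_eq ?_).trans holder
  rw [ENNReal.mul_rpow_of_nonneg _ _ (by positivity)]
  nth_rw 1 [← hroot (f y) hc hcr, ← hroot (g (-y + x)) hm hmr]
  ring

/-- **Young's convolution inequality**. -/
theorem lintegral_lconvolution_rpow_le (hf : AEMeasurable f μ) (hg : AEMeasurable g μ)
    (hc : 1 ≤ c) (hm : 1 ≤ m) (hr : 0 < r) (hcmr : 1 / c + 1 / m = 1 + 1 / r) :
    (∫⁻ x, (f ⋆ₗ[μ] g) x ^ r ∂μ) ^ (1 / r) ≤
      (∫⁻ x, f x ^ c ∂μ) ^ (1 / c) * (∫⁻ x, g x ^ m ∂μ) ^ (1 / m) := by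
  have hcr : 1 / r ≤ 1 / c := by linarith [(div_le_one (by linarith)).2 hm]
  have hmr : 1 / r ≤ 1 / m := by linarith [(div_le_one (by linarith)).2 hc]
  set A := ∫⁻ x, f x ^ c ∂μ
  set B := ∫⁻ x, g x ^ m ∂μ
  have hpow (a : ℝ≥0∞) : (a ^ (1 / r)) ^ r = a := by
    rw [one_div, ENNReal.rpow_inv_rpow hr.ne']
  have hsplit (a : ℝ≥0∞) {p : ℝ} (hpr : 1 / r ≤ 1 / p) :
      a ^ (1 / r) * a ^ (1 / p - 1 / r) = a ^ (1 / p) := by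
    rw [← ENNReal.rpow_add_of_nonneg _ _ (by positivity) (sub_nonneg.2 hpr), add_sub_cancel]
  rw [one_div r, ENNReal.rpow_inv_le_iff hr]
  calc ∫⁻ x, (f ⋆ₗ[μ] g) x ^ r ∂μ
      ≤ ∫⁻ x, ((fun y => f y ^ c) ⋆ₗ[μ] fun y => g y ^ m) x *
          (A ^ (1 / c - 1 / r) * B ^ (1 / m - 1 / r)) ^ r ∂μ := by
        refine lintegral_mono fun x => ?_
        grw [lconvolution_le_rpow_mul_rpow hf hg (by linarith) (by linarith) hr hcr hmr hcmr,
          mul_assoc, ENNReal.mul_rpow_of_nonneg _ _ hr.le, hpow]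
    _ = A * B * (A ^ (1 / c - 1 / r) * B ^ (1 / m - 1 / r)) ^ r := by
        rw [lintegral_mul_const'' _ (by fun_prop), lintegral_lconvolution (by fun_prop)
          (by fun_prop)]
    _ = (A ^ (1 / c) * B ^ (1 / m)) ^ r := by
        rw [← hsplit A hcr, ← hsplit B hmr]
        simp only [ENNReal.mul_rpow_of_nonneg _ _ hr.le, hpow]
        ring

end Convolution

section Minkowski

variable {S X : Type*} [MeasurableSpace S] [MeasurableSpace X] {μ : Measure S} {ν : Measure X}
  {r : ℝ}

theorem lintegral_rpow_le_lintegral_rpow_mul_rpow (hr : 1 ≤ r) {h w : S → ℝ≥0∞}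
    (hh : AEMeasurable h μ) (hw : AEMeasurable w μ) (hw_top : ∀ᵐ s ∂μ, w s ≠ ∞)
    (hw_zero : ∀ᵐ s ∂μ, w s = 0 → h s = 0) :
    (∫⁻ s, h s ∂μ) ^ r ≤
      (∫⁻ s, h s ^ r * w s ^ (1 - r) ∂μ) * (∫⁻ s, w s ∂μ) ^ (r - 1) := by
  have hr0 : 0 < r := by linarith
  have hsplit : ∀ᵐ s ∂μ, h s ≤ (h s ^ r * w s ^ (1 - r)) ^ (1 / r) * w s ^ (1 - 1 / r) := by
    filter_upwards [hw_top, hw_zero] with s hs_top hs_zero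
    rcases eq_or_ne (w s) 0 with h0 | h0
    · simp [hs_zero h0]
    · rw [ENNReal.mul_rpow_of_nonneg _ _ (by positivity), one_div,
        ENNReal.rpow_rpow_inv hr0.ne', mul_assoc, ← ENNReal.rpow_mul,
        ← ENNReal.rpow_add _ _ h0 hs_top]
      simp [show (1 - r) * r⁻¹ + (1 - r⁻¹) = 0 by field_simp; ring]
  have holder := (lintegral_mono_ae hsplit).trans
    (ENNReal.lintegral_mul_norm_pow_le (by fun_prop) hw (by positivity)
      (sub_nonneg.2 ((div_le_one hr0).2 hr)) (by ring))
  grw [holder, ENNReal.mul_rpow_of_nonneg _ _ hr0.le, ← ENNReal.rpow_mul, ← ENNReal.rpow_mul]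
  rw [one_div_mul_cancel hr0.ne', ENNReal.rpow_one, sub_mul, one_div_mul_cancel hr0.ne', one_mul]

theorem ae_ae_eq_zero_of_lintegral_eq_zero [SFinite μ] [SFinite ν] {H : S → X → ℝ≥0∞}
    (hH : Measurable (Function.uncurry H)) :
    ∀ᵐ x ∂ν, ∀ᵐ s ∂μ, ∫⁻ y, H s y ∂ν = 0 → H s x = 0 := by
  have hmeas : MeasurableSet {z : S × X | ∫⁻ y, H z.1 y ∂ν = 0 → H z.1 z.2 = 0} :=
    .imp (measurable_fst (hH.lintegral_prod_right (measurableSet_singleton 0)))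
      (hH (measurableSet_singleton 0))
  refine (Measure.ae_ae_comm hmeas).1 (.of_forall fun s => ?_)
  by_cases hs : ∫⁻ y, H s y ∂ν = 0
  · filter_upwards [(lintegral_eq_zero_iff (by fun_prop)).1 hs] with x hx _ using hx
  · exact .of_forall fun x h => absurd h hs

/-- **Minkowski's integral inequality**. -/
theorem lintegral_lintegral_rpow_le [SFinite μ] [SFinite ν] (hr : 1 ≤ r) {H : S → X → ℝ≥0∞}
    (hH : Measurable (Function.uncurry H)) :
    (∫⁻ x, (∫⁻ s, H s x ∂μ) ^ r ∂ν) ^ (1 / r) ≤ ∫⁻ s, (∫⁻ x, H s x ^ r ∂ν) ^ (1 / r) ∂μ := by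
  have hr0 : 0 < r := by linarith
  have hHr : Measurable (Function.uncurry fun s x => H s x ^ r) := hH.pow_const r
  set W : S → ℝ≥0∞ := fun s => (∫⁻ x, H s x ^ r ∂ν) ^ (1 / r)
  have hW : Measurable W := hHr.lintegral_prod_right.pow_const _
  have hWr (s : S) : ∫⁻ x, H s x ^ r ∂ν = W s ^ r := by
    simp only [W, one_div, ENNReal.rpow_inv_rpow hr0.ne']
  rcases eq_or_ne (∫⁻ s, W s ∂μ) ∞ with hW_int | hW_int
  · simp [hW_int]
  have hW_top : ∀ᵐ s ∂μ, W s ≠ ∞ := (ae_lt_top hW hW_int).mono fun s hs => hs.ne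
  have hW_zero : ∀ᵐ x ∂ν, ∀ᵐ s ∂μ, W s = 0 → H s x = 0 := by
    simpa [hWr, hr0, hr0.not_gt] using ae_ae_eq_zero_of_lintegral_eq_zero (μ := μ) (ν := ν) hHr
  have hHW : Measurable (Function.uncurry fun s x => H s x ^ r * W s ^ (1 - r)) :=
    hHr.mul ((hW.comp measurable_fst).pow_const _)
  rw [one_div, ENNReal.rpow_inv_le_iff hr0]
  calc ∫⁻ x, (∫⁻ s, H s x ∂μ) ^ r ∂ν
      ≤ ∫⁻ x, (∫⁻ s, H s x ^ r * W s ^ (1 - r) ∂μ) * (∫⁻ s, W s ∂μ) ^ (r - 1) ∂ν :=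
        lintegral_mono_ae <| hW_zero.mono fun x hx =>
          lintegral_rpow_le_lintegral_rpow_mul_rpow hr (by fun_prop) hW.aemeasurable hW_top hx
    _ = (∫⁻ s, W s ^ r * W s ^ (1 - r) ∂μ) * (∫⁻ s, W s ∂μ) ^ (r - 1) := by
        rw [lintegral_mul_const _ hHW.lintegral_prod_left,
          ← lintegral_lintegral_swap hHW.aemeasurable]
        simp only [← hWr]
        congr! with s
        exact lintegral_mul_const _ (by fun_prop)
    _ ≤ (∫⁻ s, W s ∂μ) * (∫⁻ s, W s ∂μ) ^ (r - 1) := by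
        gcongr ?_ * _
        refine lintegral_mono_ae (hW_top.mono fun s hs => ?_)
        rcases eq_or_ne (W s) 0 with h0 | h0
        · simp [h0, hr0]
        · rw [← ENNReal.rpow_add _ _ h0 hs, add_sub_cancel, ENNReal.rpow_one]
    _ = (∫⁻ s, W s ∂μ) ^ r := by
        nth_rw 1 [← ENNReal.rpow_one (∫⁻ s, W s ∂μ)]
        rw [← ENNReal.rpow_add_of_nonneg _ _ zero_le_one (by linarith), add_sub_cancel]

end Minkowski

section MixedNorm

variable {S G : Type*} [MeasurableSpace S] [MeasurableSpace G] {μ : Measure S} [SFinite μ]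
  {ν : Measure G}

theorem eLpNorm_ofReal_eq_lintegral {E : Type*} [NormedAddCommGroup E] (f : G → E) {p : ℝ}
    (hp : 0 < p) :
    eLpNorm f (ENNReal.ofReal p) ν = (∫⁻ x, ‖f x‖ₑ ^ p ∂ν) ^ (1 / p) := by
  rw [eLpNorm_eq_lintegral_rpow_enorm_toReal (by simpa using hp) ENNReal.ofReal_ne_top,
    ENNReal.toReal_ofReal hp.le]

variable {𝕜 : Type*} [RCLike 𝕜] [AddCommGroup G] [MeasurableAdd₂ G] [MeasurableNeg G]
  [SFinite ν] [ν.IsAddLeftInvariant] [ν.IsNegInvariant] {c m r : ℝ}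

theorem eLpNorm_integral_convolution_le {K f : S → G → 𝕜} (hc : 1 ≤ c) (hm : 1 ≤ m)
    (hr : 1 ≤ r) (hcmr : 1 / c + 1 / m = 1 + 1 / r)
    (hK : StronglyMeasurable (Function.uncurry K))
    (hf : AEStronglyMeasurable (Function.uncurry f) (μ.prod ν)) :
    eLpNorm (fun x => ∫ s, ∫ y, K s (x - y) * f s y ∂ν ∂μ) (ENNReal.ofReal r) ν ≤
      ∫⁻ s, eLpNorm (K s) (ENNReal.ofReal m) ν * eLpNorm (f s) (ENNReal.ofReal c) ν ∂μ := by
  have hff : ∀ᵐ s ∂μ, f s =ᵐ[ν] fun y => hf.mk _ (s, y) :=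
    Measure.ae_ae_of_ae_prod hf.ae_eq_mk
  set k : S → G → ℝ≥0∞ := fun s x => ‖K s x‖ₑ
  set g : S → G → ℝ≥0∞ := fun s y => ‖hf.mk _ (s, y)‖ₑ
  have hk : Measurable (Function.uncurry k) := hK.measurable.enorm
  have hg : Measurable (Function.uncurry g) := hf.stronglyMeasurable_mk.measurable.enorm
  have hgk : Measurable (Function.uncurry fun s => g s ⋆ₗ[ν] k s) := by
    have h₁ : Measurable fun z : (S × G) × G => (z.1.1, z.2) := by fun_prop
    have h₂ : Measurable fun z : (S × G) × G => (z.1.1, -z.2 + z.1.2) := by fun_prop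
    exact ((hg.comp h₁).mul (hk.comp h₂)).lintegral_prod_right'
  have hbound (x : G) : ‖∫ s, ∫ y, K s (x - y) * f s y ∂ν ∂μ‖ₑ ≤
      ∫⁻ s, (g s ⋆ₗ[ν] k s) x ∂μ := by
    refine (enorm_integral_le_lintegral_enorm _).trans
      (lintegral_mono_ae (hff.mono fun s hs => ?_))
    refine (enorm_integral_le_lintegral_enorm _).trans
      (lintegral_mono_ae (hs.mono fun y hy => le_of_eq ?_))
    simp only [hy, enorm_mul, k, g, neg_add_eq_sub, mul_comm]
  calc eLpNorm (fun x => ∫ s, ∫ y, K s (x - y) * f s y ∂ν ∂μ) (ENNReal.ofReal r) ν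
      ≤ (∫⁻ x, (∫⁻ s, (g s ⋆ₗ[ν] k s) x ∂μ) ^ r ∂ν) ^ (1 / r) := by
        rw [eLpNorm_ofReal_eq_lintegral _ (by linarith)]
        gcongr with x
        exact hbound x
    _ ≤ ∫⁻ s, (∫⁻ x, (g s ⋆ₗ[ν] k s) x ^ r ∂ν) ^ (1 / r) ∂μ := lintegral_lintegral_rpow_le hr hgk
    _ ≤ ∫⁻ s, eLpNorm (K s) (ENNReal.ofReal m) ν * eLpNorm (f s) (ENNReal.ofReal c) ν ∂μ := by
        refine lintegral_mono_ae (hff.mono fun s hs => ?_)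
        rw [eLpNorm_congr_ae hs, eLpNorm_ofReal_eq_lintegral _ (by linarith),
          eLpNorm_ofReal_eq_lintegral _ (by linarith), mul_comm]
        exact lintegral_lconvolution_rpow_le (by fun_prop) (by fun_prop) hc hm (by linarith) hcmr

end MixedNorm

section Time

theorem lintegral_Ico_sub_rpow {a t : ℝ} (ha : -1 < a) (ht : 0 ≤ t) :
    ∫⁻ s in Set.Ico 0 t, ENNReal.ofReal ((t - s) ^ a) =
      ENNReal.ofReal (t ^ (a + 1) / (a + 1)) := by
  have hint : IntervalIntegrable (fun s => (t - s) ^ a) volume 0 t := by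
    simpa using ((intervalIntegral.intervalIntegrable_rpow' (a := 0) (b := t)
      ha).comp_sub_left t).symm
  have hval : ∫ s in (0 : ℝ)..t, (t - s) ^ a = t ^ (a + 1) / (a + 1) := by
    rw [intervalIntegral.integral_comp_sub_left (fun s => s ^ a) t, sub_self, sub_zero,
      integral_rpow (Or.inl ha), Real.zero_rpow (by linarith), sub_zero]
  rw [setLIntegral_congr (Ico_ae_eq_Ioc (μ := volume)), ← hval,
    intervalIntegral.integral_of_le ht, ofReal_integral_eq_lintegral_ofReal
      ((intervalIntegrable_iff_integrableOn_Ioc_of_le ht).1 hint)]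
  filter_upwards [ae_restrict_mem measurableSet_Ioc] with s hs
  exact Real.rpow_nonneg (sub_nonneg.2 hs.2) _

theorem exists_lintegral_Ico_sub_rpow_mul_le {γ e : ℝ} (hγ : 1 < γ) (he : 0 < 1 - 1 / γ - e) :
    ∃ C : ℝ, 0 < C ∧ ∀ t : ℝ, 0 ≤ t → ∀ F : ℝ → ℝ≥0∞,
      AEMeasurable F (volume.restrict (Set.Ico 0 t)) →
      ∫⁻ s in Set.Ico 0 t, ENNReal.ofReal ((t - s) ^ (-e)) * F s ≤
        ENNReal.ofReal (C * t ^ (1 - 1 / γ - e)) *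
          (∫⁻ s in Set.Ico 0 t, F s ^ γ) ^ (1 / γ) := by
  obtain ⟨γ', hγ'⟩ : ∃ γ' : ℝ, γ'.HolderConjugate γ :=
    ⟨_, (Real.HolderConjugate.conjExponent hγ).symm⟩
  have hγ'0 : 0 < γ' := hγ'.pos
  have hγ'inv : 1 / γ' = 1 - 1 / γ := by simp [hγ'.symm.one_sub_inv]
  have hexp : -e * γ' + 1 = (1 - 1 / γ - e) * γ' := by
    rw [← hγ'inv]; field_simp; ring
  have hpos : 0 < -e * γ' + 1 := hexp ▸ by positivity
  refine ⟨(1 / (-e * γ' + 1)) ^ (1 / γ'), by positivity, fun t ht F hF => ?_⟩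
  have hweight : ∫⁻ s in Set.Ico 0 t, ENNReal.ofReal ((t - s) ^ (-e)) ^ γ' =
      ENNReal.ofReal (t ^ (-e * γ' + 1) / (-e * γ' + 1)) := by
    rw [← lintegral_Ico_sub_rpow (by linarith) ht]
    refine setLIntegral_congr_fun measurableSet_Ico fun s hs => ?_
    have hts : 0 ≤ t - s := sub_nonneg.2 hs.2.le
    simp only [ENNReal.ofReal_rpow_of_nonneg (Real.rpow_nonneg hts _) hγ'0.le,
      Real.rpow_mul hts]
  refine (ENNReal.lintegral_mul_le_Lp_mul_Lq _ hγ' (by fun_prop) hF).trans_eq ?_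
  rw [hweight, ENNReal.ofReal_rpow_of_nonneg (by positivity) (by positivity), div_eq_mul_one_div,
    Real.mul_rpow (by positivity) (by positivity), ← Real.rpow_mul ht, hexp,
    mul_assoc _ γ', mul_one_div_cancel hγ'0.ne', mul_one, mul_comm (t ^ _)]

end Time

section Fourier

variable {V E : Type*} [NormedAddCommGroup V] [InnerProductSpace ℝ V] [FiniteDimensional ℝ V]
  [MeasurableSpace V] [BorelSpace V] [NormedAddCommGroup E] [NormedSpace ℂ E]

theorem norm_fourierInv_le_integral_norm (g : V → E) (x : V) : ‖𝓕⁻ g x‖ ≤ ∫ ξ, ‖g ξ‖ :=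
  VectorFourier.norm_fourierIntegral_le_integral_norm ..

theorem continuous_fourierInv {g : V → E} (hg : Integrable g) : Continuous (𝓕⁻ g) :=
  VectorFourier.fourierIntegral_continuous Real.continuous_fourierChar (L := -innerₗ V)
    (by simpa using! continuous_inner.neg) hg

theorem fourierInv_const_smul (a : ℂ) (g : V → E) : 𝓕⁻ (a • g) = a • 𝓕⁻ g :=
  VectorFourier.fourierIntegral_const_smul 𝐞 volume (-innerₗ V) g a

theorem fourierInv_comp_inv_smul (g : V → E) {a : ℝ} (ha : a ≠ 0) (x : V) :
    𝓕⁻ (fun ξ => g (a⁻¹ • ξ)) x = |a ^ Module.finrank ℝ V| • 𝓕⁻ g (a • x) := by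
  simp only [Real.fourierInv_eq]
  rw [← Measure.integral_comp_inv_smul]
  simp [real_inner_smul_left, real_inner_smul_right, ha]

theorem fourierInv_integral {S : Type*} [MeasurableSpace S] {μ : Measure S} [SFinite μ]
    {G : S → V → E} (hG : Integrable (Function.uncurry G) (μ.prod volume)) (x : V) :
    𝓕⁻ (fun ξ => ∫ s, G s ξ ∂μ) x = ∫ s, 𝓕⁻ (G s) x ∂μ := by
  simp only [Real.fourierInv_eq, Circle.smul_def]
  have hchar : Continuous fun z : V => (𝐞 (inner ℝ z x) : ℂ) := by fun_prop
  rw [integral_integral_swap]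
  · simp only [integral_smul]
  · exact hG.bdd_smul 1 (hchar.measurable.comp measurable_snd).aestronglyMeasurable
      (.of_forall fun z => (Circle.norm_coe _).le)

theorem integrable_smul_comp_inv_smul {g : ℝ → ℝ} {Φ : V → E} (hΦ : Integrable Φ)
    (hΦm : StronglyMeasurable Φ)
    (hg : IntegrableOn (fun w => w ^ Module.finrank ℝ V * g w) (Set.Ioi 0)) :
    Integrable (Function.uncurry fun w ξ => g w • Φ (w⁻¹ • ξ))
      ((volume.restrict (Set.Ioi 0)).prod volume) := by
  have hgm : AEStronglyMeasurable g (volume.restrict (Set.Ioi 0)) := by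
    have hinv : Measurable fun w : ℝ => (w ^ Module.finrank ℝ V)⁻¹ := by fun_prop
    refine (hinv.aestronglyMeasurable.mul hg.aestronglyMeasurable).congr ?_
    filter_upwards [ae_restrict_mem measurableSet_Ioi] with w hw
    exact inv_mul_cancel_left₀ (pow_pos hw _).ne' _
  have hdil : Measurable fun z : ℝ × V => z.1⁻¹ • z.2 := by fun_prop
  have hmeas : AEStronglyMeasurable (Function.uncurry fun w ξ => g w • Φ (w⁻¹ • ξ))
      ((volume.restrict (Set.Ioi 0)).prod volume) :=
    hgm.comp_fst.smul (hΦm.comp_measurable hdil).aestronglyMeasurable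
  rw [integrable_prod_iff hmeas]
  constructor
  · filter_upwards [ae_restrict_mem measurableSet_Ioi] with w hw
    exact (hΦ.comp_smul (inv_ne_zero hw.ne')).smul (g w)
  · refine (hg.norm.mul_const (∫ ξ, ‖Φ ξ‖)).congr ?_
    filter_upwards [ae_restrict_mem measurableSet_Ioi] with w hw
    simp only [Function.uncurry_apply_pair, norm_smul]
    rw [integral_const_mul, Measure.integral_comp_inv_smul volume fun ξ => ‖Φ ξ‖, norm_mul,
      Real.norm_eq_abs (w ^ _), smul_eq_mul]
    ring

/-- An integrable symbol `Ψ` whose inverse Fourier transform is `O(‖x‖ ^ (-θ))`. The transform is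
bounded anyway, so for `θ ≥ 0` this only concerns large `x`. -/
def HasFourierDecay (θ : ℝ) (Ψ : V → E) : Prop :=
  Integrable Ψ ∧ ∃ C : ℝ, ∀ x : V, ‖x‖ ^ θ * ‖𝓕⁻ Ψ x‖ ≤ C

namespace HasFourierDecay

variable {θ : ℝ} {Φ Ψ : V → E}

theorem add (hΦ : HasFourierDecay θ Φ) (hΨ : HasFourierDecay θ Ψ) :
    HasFourierDecay θ (Φ + Ψ) := by
  obtain ⟨hΦi, C, hC⟩ := hΦ
  obtain ⟨hΨi, D, hD⟩ := hΨ
  refine ⟨hΦi.add hΨi, C + D, fun x => ?_⟩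
  have hadd : 𝓕⁻ (Φ + Ψ) = 𝓕⁻ Φ + 𝓕⁻ Ψ :=
    VectorFourier.fourierIntegral_add (L := -innerₗ V) Real.continuous_fourierChar
      (by simpa using! continuous_inner.neg) hΦi hΨi
  grw [hadd, Pi.add_apply, norm_add_le, mul_add, hC, hD]

theorem const_smul (hΨ : HasFourierDecay θ Ψ) (a : ℂ) : HasFourierDecay θ (a • Ψ) := by
  obtain ⟨hΨi, C, hC⟩ := hΨ
  refine ⟨hΨi.smul a, ‖a‖ * C, fun x => ?_⟩
  grw [fourierInv_const_smul, Pi.smul_apply, norm_smul, mul_left_comm, hC]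

theorem of_contDiff_hasCompactSupport {k : ℕ} (hΨ : ContDiff ℝ k Ψ)
    (hsupp : HasCompactSupport Ψ) (hθ : 0 ≤ θ) (hθk : θ ≤ k) : HasFourierDecay θ Ψ := by
  obtain ⟨C, hC⟩ : ∃ C : ℝ, ∀ x : V, ‖x‖ ^ k * ‖𝓕⁻ Ψ x‖ ≤ C := by
    have hint (i j : ℕ) (_ : (i : ℕ∞) ≤ (0 : ℕ)) (hj : (j : ℕ∞) ≤ k) :
        Integrable fun ξ => ‖ξ‖ ^ i * ‖iteratedFDeriv ℝ j Ψ ξ‖ := by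
      have := hΨ.continuous_iteratedFDeriv (m := j) (by exact_mod_cast hj)
      exact Continuous.integrable_of_hasCompactSupport (by fun_prop)
        (hsupp.iteratedFDeriv j).norm.mul_left
    refine ⟨_, fun x => (le_of_eq ?_).trans
      (Real.pow_mul_norm_iteratedFDeriv_fourier_le hΨ hint le_rfl le_rfl (-x))⟩
    rw [Real.fourierInv_eq_fourier_neg, norm_neg, norm_iteratedFDeriv_zero]
  refine ⟨hΨ.continuous.integrable_of_hasCompactSupport hsupp, (∫ ξ, ‖Ψ ξ‖) + C, fun x => ?_⟩
  have hpow : ‖x‖ ^ θ ≤ 1 + ‖x‖ ^ k := by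
    rcases le_total ‖x‖ 1 with h | h
    · grw [Real.rpow_le_one (norm_nonneg x) h hθ, ← pow_nonneg (norm_nonneg x) k, add_zero]
    · grw [hθk, Real.rpow_natCast, ← zero_le_one, zero_add]
  grw [hpow, add_mul, one_mul, hC, norm_fourierInv_le_integral_norm]

theorem exists_norm_fourierInv_le (hΨ : HasFourierDecay θ Ψ) (hθ : 0 ≤ θ) :
    ∃ C : ℝ, ∀ x, ‖𝓕⁻ Ψ x‖ ≤ C * (1 + ‖x‖) ^ (-θ) := by
  obtain ⟨-, C, hC⟩ := hΨ
  refine ⟨2 ^ θ * ((∫ ξ, ‖Ψ ξ‖) + C), fun x => ?_⟩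
  have hpow : (1 + ‖x‖) ^ θ ≤ 2 ^ θ * (1 + ‖x‖ ^ θ) := by
    have hx : 0 ≤ ‖x‖ ^ θ := by positivity
    rcases le_total ‖x‖ 1 with h | h
    · grw [h, ← hx, add_zero, mul_one, one_add_one_eq_two]
    · calc (1 + ‖x‖) ^ θ ≤ (2 * ‖x‖) ^ θ := by gcongr; linarith
        _ = 2 ^ θ * ‖x‖ ^ θ := Real.mul_rpow zero_le_two (norm_nonneg x)
        _ ≤ 2 ^ θ * (1 + ‖x‖ ^ θ) := by gcongr; linarith
  rw [Real.rpow_neg (by positivity), ← div_eq_mul_inv, le_div_iff₀ (by positivity), mul_comm]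
  grw [hpow, mul_assoc, add_mul, one_mul, hC, norm_fourierInv_le_integral_norm]

theorem memLp_fourierInv (hΨ : HasFourierDecay θ Ψ) (hθ : Module.finrank ℝ V < θ) {m : ℝ}
    (hm : 1 ≤ m) : MemLp (𝓕⁻ Ψ) (ENNReal.ofReal m) := by
  have hθ0 : 0 < θ := hθ.trans_le' (Nat.cast_nonneg _)
  obtain ⟨C, hC⟩ := hΨ.exists_norm_fourierInv_le hθ0.le
  have hweight : MemLp (fun x : V => (1 + ‖x‖) ^ (-θ)) (ENNReal.ofReal m) := by
    have hmeas : Measurable fun x : V => (1 + ‖x‖) ^ (-θ) := by fun_prop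
    rw [← integrable_norm_rpow_iff hmeas.aestronglyMeasurable (by simp; linarith)
      ENNReal.ofReal_ne_top, ENNReal.toReal_ofReal (by linarith)]
    refine (integrable_one_add_norm (r := θ * m) (by nlinarith)).congr (.of_forall fun x => ?_)
    simp only [Real.norm_of_nonneg (Real.rpow_nonneg (by positivity : 0 ≤ 1 + ‖x‖) _),
      ← Real.rpow_mul (by positivity : 0 ≤ 1 + ‖x‖), neg_mul]
  refine (hweight.const_mul C).mono (continuous_fourierInv hΨ.1).aestronglyMeasurable
    (.of_forall fun x => ?_)
  exact (hC x).trans (le_abs_self _)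

theorem integral_comp_inv_smul {g : ℝ → ℝ} (hΦ : HasFourierDecay θ Φ)
    (hΦm : StronglyMeasurable Φ)
    (hg : IntegrableOn (fun w => w ^ Module.finrank ℝ V * g w) (Set.Ioi 0))
    (hgθ : IntegrableOn (fun w => w ^ (Module.finrank ℝ V - θ) * g w) (Set.Ioi 0)) :
    HasFourierDecay θ fun ξ => ∫ w in Set.Ioi 0, g w • Φ (w⁻¹ • ξ) := by
  obtain ⟨hΦi, C, hC⟩ := hΦ
  have hint := integrable_smul_comp_inv_smul hΦi hΦm hg
  refine ⟨hint.integral_prod_right, ∫ w in Set.Ioi 0, ‖w ^ (Module.finrank ℝ V - θ) * g w‖ * C,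
    fun x => ?_⟩
  have hx : 0 ≤ ‖x‖ ^ θ := by positivity
  rw [fourierInv_integral hint, ← Real.norm_of_nonneg hx, ← norm_smul, ← integral_smul]
  refine norm_integral_le_of_norm_le (hgθ.norm.mul_const C) ?_
  filter_upwards [ae_restrict_mem measurableSet_Ioi] with w (hw : 0 < w)
  have hlayer : 𝓕⁻ (fun ξ => g w • Φ (w⁻¹ • ξ)) x =
      g w • |w ^ Module.finrank ℝ V| • 𝓕⁻ Φ (w • x) := by
    rw [← fourierInv_comp_inv_smul Φ hw.ne']
    exact congrFun (fourierInv_const_smul (g w : ℂ) fun ξ => Φ (w⁻¹ • ξ)) x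
  calc ‖‖x‖ ^ θ • 𝓕⁻ (fun ξ => g w • Φ (w⁻¹ • ξ)) x‖
      = ‖w ^ (Module.finrank ℝ V - θ) * g w‖ * (‖w • x‖ ^ θ * ‖𝓕⁻ Φ (w • x)‖) := by
        rw [hlayer, norm_smul, norm_smul, norm_smul, norm_smul, Real.norm_of_nonneg hx,
          Real.mul_rpow (norm_nonneg w) (norm_nonneg x), norm_mul, Real.rpow_sub hw,
          Real.rpow_natCast, norm_div, Real.norm_of_nonneg hw.le, norm_abs_eq_norm,
          Real.norm_of_nonneg (Real.rpow_nonneg hw.le θ)]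
        field_simp
    _ ≤ ‖w ^ (Module.finrank ℝ V - θ) * g w‖ * C := by grw [hC]

end HasFourierDecay

end Fourier

section BochnerRiesz

theorem hasDerivAt_max_zero_pow (k : ℕ) (x : ℝ) :
    HasDerivAt (fun x : ℝ => max 0 x ^ (k + 2)) ((k + 2) * max 0 x ^ (k + 1)) x := by
  rcases lt_trichotomy x 0 with hx | rfl | hx
  · have hzero : (fun x : ℝ => max 0 x ^ (k + 2)) =ᶠ[nhds x] fun _ => 0 := by
      filter_upwards [gt_mem_nhds hx] with y hy
      simp [max_eq_left hy.le]
    simpa [max_eq_left hx.le] using (hasDerivAt_const x (0 : ℝ)).congr_of_eventuallyEq hzero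
  · have hbigO : (fun x : ℝ => max 0 x ^ (k + 2)) =O[nhds 0] fun x => ‖x - 0‖ ^ (k + 2) := by
      refine .of_norm_le fun x => ?_
      rw [norm_pow, sub_zero, Real.norm_of_nonneg (le_max_left 0 x)]
      gcongr
      exact max_le (norm_nonneg x) (Real.le_norm_self x)
    simpa using (hbigO.hasFDerivAt (by omega)).hasDerivAt
  · have hpow : (fun x : ℝ => max 0 x ^ (k + 2)) =ᶠ[nhds x] fun x => x ^ (k + 2) := by
      filter_upwards [lt_mem_nhds hx] with y hy
      simp [max_eq_right hy.le]
    simpa [max_eq_right hx.le] using (hasDerivAt_pow (k + 2) x).congr_of_eventuallyEq hpow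

theorem contDiff_max_zero_pow (k : ℕ) : ContDiff ℝ k fun x : ℝ => max 0 x ^ (k + 1) := by
  induction k with
  | zero => exact contDiff_zero.2 (by fun_prop)
  | succ k ih =>
    rw [Nat.cast_succ, contDiff_succ_iff_deriv]
    refine ⟨fun x => (hasDerivAt_max_zero_pow k x).differentiableAt, by simp, ?_⟩
    rw [funext fun x => (hasDerivAt_max_zero_pow k x).deriv]
    exact contDiff_const.mul ih

variable {V : Type*} [NormedAddCommGroup V]

/-- The Bochner–Riesz multiplier `(1 - ‖ξ‖²)₊ ^ N`. As `0 ^ 0 = 1`, for `N = 0` it is constant and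
not the indicator of the unit ball. -/
def bochnerRieszMultiplier (N : ℕ) (ξ : V) : ℂ := ((max 0 (1 - ‖ξ‖ ^ 2) ^ N : ℝ) : ℂ)

theorem bochnerRieszMultiplier_of_one_le_norm {N : ℕ} (hN : N ≠ 0) {ξ : V} (hξ : 1 ≤ ‖ξ‖) :
    bochnerRieszMultiplier N ξ = 0 := by
  have : 1 - ‖ξ‖ ^ 2 ≤ 0 := sub_nonpos.2 (one_le_pow₀ hξ)
  simp [bochnerRieszMultiplier, max_eq_left this, hN]

theorem bochnerRieszMultiplier_of_norm_le_one (N : ℕ) {ξ : V} (hξ : ‖ξ‖ ≤ 1) :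
    bochnerRieszMultiplier N ξ = ((1 - ‖ξ‖ ^ 2) ^ N : ℝ) := by
  have : 0 ≤ 1 - ‖ξ‖ ^ 2 := sub_nonneg.2 (pow_le_one₀ (norm_nonneg ξ) hξ)
  rw [bochnerRieszMultiplier, max_eq_right this]

variable [InnerProductSpace ℝ V]

theorem contDiff_bochnerRieszMultiplier (k : ℕ) :
    ContDiff ℝ k (bochnerRieszMultiplier (k + 1) : V → ℂ) :=
  (ofRealCLM.contDiff (n := k)).comp
    ((contDiff_max_zero_pow k).comp (contDiff_const.sub (contDiff_norm_sq ℝ)))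

theorem hasCompactSupport_bochnerRieszMultiplier [FiniteDimensional ℝ V] {N : ℕ} (hN : N ≠ 0) :
    HasCompactSupport (bochnerRieszMultiplier N : V → ℂ) :=
  .intro (isCompact_closedBall 0 1) fun _ hξ =>
    bochnerRieszMultiplier_of_one_le_norm hN (by simpa using hξ : 1 < ‖_‖).le

end BochnerRiesz

section Superposition

theorem tendsto_rpow_mul_exp_neg_rpow {β : ℝ} (hβ : 0 < β) (s : ℝ) :
    Filter.Tendsto (fun w : ℝ => w ^ s * Real.exp (-w ^ β)) Filter.atTop (nhds 0) := by
  refine ((tendsto_rpow_mul_exp_neg_mul_atTop_nhds_zero (s / β) 1 one_pos).comp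
    (tendsto_rpow_atTop hβ)).congr' ?_
  filter_upwards [Filter.eventually_gt_atTop 0] with w hw
  simp [← Real.rpow_mul hw.le, mul_div_cancel₀ _ hβ.ne']

theorem continuous_rpow_mul_exp_neg_rpow {β s : ℝ} (hβ : 0 ≤ β) (hs : 0 ≤ s) :
    Continuous fun w : ℝ => w ^ s * Real.exp (-w ^ β) :=
  (Real.continuous_rpow_const hs).mul (Real.continuous_rpow_const hβ).neg.rexp

theorem hasDerivAt_rpow_mul_exp_neg_rpow (β s : ℝ) {w : ℝ} (hw : 0 < w) :
    HasDerivAt (fun w : ℝ => w ^ s * Real.exp (-w ^ β))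
      (s * (w ^ (s - 1) * Real.exp (-w ^ β)) - β * (w ^ (s + β - 1) * Real.exp (-w ^ β))) w := by
  have hpow (p : ℝ) : HasDerivAt (fun w : ℝ => w ^ p) (p * w ^ (p - 1)) w :=
    Real.hasDerivAt_rpow_const (Or.inl hw.ne')
  refine ((hpow s).fun_mul (hpow β).fun_neg.exp).congr_deriv ?_
  rw [add_sub_assoc, Real.rpow_add hw]
  ring

theorem integrableOn_rpow_sub_one_mul_exp_neg_rpow {β s : ℝ} (hβ : 0 < β) (hs : 0 < s) :
    IntegrableOn (fun w : ℝ => w ^ (s - 1) * Real.exp (-w ^ β)) (Set.Ioi 0) :=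
  integrableOn_rpow_mul_exp_neg_rpow (by linarith) hβ

theorem one_sub_div_sq_mem_Icc {u w : ℝ} (hu : 0 ≤ u) (huw : u ≤ w) :
    1 - (u / w) ^ 2 ∈ Set.Icc 0 1 := by
  have := pow_le_one₀ (n := 2) (div_nonneg hu (hu.trans huw)) (div_le_one_of_le₀ huw (hu.trans huw))
  exact ⟨sub_nonneg.2 this, sub_le_self _ (sq_nonneg _)⟩

/-- The value at radius `u` of the superposition `∫ (1 - |ξ / w|²)₊ ^ N w ^ (s - 1) e ^ (-w ^ β) dw`
of dilated Bochner–Riesz multipliers. -/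
def bochnerRieszSuperposition (β : ℝ) (N : ℕ) (s u : ℝ) : ℝ :=
  ∫ w in Set.Ioi u, (1 - (u / w) ^ 2) ^ N * (w ^ (s - 1) * Real.exp (-w ^ β))

variable {β s u : ℝ}

theorem integrableOn_bochnerRieszSuperposition (hβ : 0 < β) (N : ℕ) (hs : 0 < s) (hu : 0 ≤ u) :
    IntegrableOn (fun w : ℝ => (1 - (u / w) ^ 2) ^ N * (w ^ (s - 1) * Real.exp (-w ^ β)))
      (Set.Ioi u) := by
  refine ((integrableOn_rpow_sub_one_mul_exp_neg_rpow hβ hs).mono_set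
    (Set.Ioi_subset_Ioi hu)).bdd_mul (c := 1) (by fun_prop) ?_
  filter_upwards [ae_restrict_mem measurableSet_Ioi] with w hw
  obtain ⟨h0, h1⟩ := one_sub_div_sq_mem_Icc hu hw.le
  rw [norm_pow, Real.norm_of_nonneg h0]
  exact pow_le_one₀ h0 h1

theorem rpow_mul_exp_neg_rpow_eq_bochnerRieszSuperposition (hβ : 0 < β) (hs : 0 ≤ s)
    (hu : 0 ≤ u) :
    u ^ s * Real.exp (-u ^ β) =
      -s * bochnerRieszSuperposition β 0 s u + β * bochnerRieszSuperposition β 0 (s + β) u := by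
  have hint₁ : IntegrableOn (fun w : ℝ => s * (w ^ (s - 1) * Real.exp (-w ^ β))) (Set.Ioi u) := by
    rcases hs.eq_or_lt with rfl | hs
    · simp
    · simpa [IntegrableOn] using (integrableOn_bochnerRieszSuperposition hβ 0 hs hu).const_mul s
  have hint₂ : IntegrableOn (fun w : ℝ => β * (w ^ (s + β - 1) * Real.exp (-w ^ β)))
      (Set.Ioi u) := by
    simpa [IntegrableOn] using
      (integrableOn_bochnerRieszSuperposition hβ 0 (add_pos_of_nonneg_of_pos hs hβ) hu).const_mul β
  have hftc := integral_Ioi_of_hasDerivAt_of_tendsto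
    (continuous_rpow_mul_exp_neg_rpow hβ.le hs).continuousWithinAt
    (fun w hw => hasDerivAt_rpow_mul_exp_neg_rpow β s (hu.trans_lt hw))
    (hint₁.sub hint₂) (tendsto_rpow_mul_exp_neg_rpow hβ s)
  rw [integral_sub hint₁ hint₂, integral_const_mul, integral_const_mul] at hftc
  simp only [bochnerRieszSuperposition, pow_zero, one_mul]
  linarith

theorem hasDerivAt_one_sub_div_sq_pow_mul (β : ℝ) (N : ℕ) (s u : ℝ) {w : ℝ} (hw : 0 < w) :
    HasDerivAt (fun w : ℝ => (1 - (u / w) ^ 2) ^ (N + 1) * (w ^ s * Real.exp (-w ^ β)))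
      (2 * (N + 1) * ((1 - (u / w) ^ 2) ^ N * (w ^ (s - 1) * Real.exp (-w ^ β))) +
        (s - 2 * (N + 1)) * ((1 - (u / w) ^ 2) ^ (N + 1) * (w ^ (s - 1) * Real.exp (-w ^ β))) -
        β * ((1 - (u / w) ^ 2) ^ (N + 1) * (w ^ (s + β - 1) * Real.exp (-w ^ β)))) w := by
  have hbase : HasDerivAt (fun w : ℝ => 1 - (u / w) ^ 2) (2 * (u / w) ^ 2 / w) w := by
    refine ((((hasDerivAt_inv hw.ne').const_mul u).fun_pow 2).const_sub 1).congr_deriv ?_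
    simp
    field_simp
  refine ((hbase.fun_pow (N + 1)).fun_mul
    (hasDerivAt_rpow_mul_exp_neg_rpow β s hw)).congr_deriv ?_
  have hpow : w ^ s = w ^ (s - 1) * w := by rw [← Real.rpow_add_one hw.ne', sub_add_cancel]
  rw [hpow, Nat.add_sub_cancel, Nat.cast_succ]
  generalize (u / w) ^ 2 = q
  field_simp
  ring

theorem continuousWithinAt_one_sub_div_sq_pow_mul (hβ : 0 ≤ β) (N : ℕ) (hs : 0 ≤ s)
    (hu : 0 ≤ u) :
    ContinuousWithinAt (fun w : ℝ => (1 - (u / w) ^ 2) ^ N * (w ^ s * Real.exp (-w ^ β)))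
      (Set.Ici u) u := by
  have hcont : ContinuousWithinAt (fun w : ℝ => w ^ s * Real.exp (-w ^ β)) (Set.Ici u) u :=
    (continuous_rpow_mul_exp_neg_rpow hβ hs).continuousWithinAt
  rcases hu.eq_or_lt with rfl | hu
  · simpa using hcont
  · exact ContinuousWithinAt.mul (by fun_prop (disch := exact hu.ne')) hcont

theorem tendsto_one_sub_div_sq_pow_mul (hβ : 0 < β) (N : ℕ) (s u : ℝ) :
    Filter.Tendsto (fun w : ℝ => (1 - (u / w) ^ 2) ^ N * (w ^ s * Real.exp (-w ^ β)))
      Filter.atTop (nhds 0) := by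
  have hbase : Filter.Tendsto (fun w : ℝ => (1 - (u / w) ^ 2) ^ N) Filter.atTop
      (nhds ((1 - 0 ^ 2) ^ N)) :=
    (((tendsto_const_nhds.div_atTop Filter.tendsto_id).pow 2).const_sub 1).pow N
  simpa using hbase.mul (tendsto_rpow_mul_exp_neg_rpow hβ s)

/- Integration by parts in `w`. The boundary term at `w = u` vanishes, because of the factor
`(1 - (u / w) ^ 2) ^ (N + 1)` if `u > 0` and of the factor `w ^ s` if `u = 0`. -/
theorem bochnerRieszSuperposition_eq_succ (hβ : 0 < β) (N : ℕ) (hs : 0 < s) (hu : 0 ≤ u) :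
    bochnerRieszSuperposition β N s u =
      (1 - s / (2 * (N + 1))) * bochnerRieszSuperposition β (N + 1) s u +
        β / (2 * (N + 1)) * bochnerRieszSuperposition β (N + 1) (s + β) u := by
  have hint₀ := (integrableOn_bochnerRieszSuperposition hβ N hs hu).const_mul (2 * (N + 1 : ℝ))
  have hint₁ := (integrableOn_bochnerRieszSuperposition hβ (N + 1) hs hu).const_mul
    (s - 2 * (N + 1))
  have hint₂ := (integrableOn_bochnerRieszSuperposition hβ (N + 1) (add_pos hs hβ) hu).const_mul β
  have hboundary : (1 - (u / u) ^ 2) ^ (N + 1) * (u ^ s * Real.exp (-u ^ β)) = 0 := by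
    rcases hu.eq_or_lt with rfl | hu
    · simp [hs.ne']
    · simp [hu.ne']
  have hftc := integral_Ioi_of_hasDerivAt_of_tendsto
    (continuousWithinAt_one_sub_div_sq_pow_mul hβ.le (N + 1) hs.le hu)
    (fun w hw => hasDerivAt_one_sub_div_sq_pow_mul β N s u (hu.trans_lt hw))
    ((hint₀.fun_add hint₁).sub hint₂) (tendsto_one_sub_div_sq_pow_mul hβ (N + 1) s u)
  rw [hboundary, integral_sub (hint₀.fun_add hint₁) hint₂, integral_add hint₀ hint₁,
    integral_const_mul, integral_const_mul, integral_const_mul] at hftc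
  rw [← bochnerRieszSuperposition, ← bochnerRieszSuperposition, ← bochnerRieszSuperposition] at hftc
  field_simp
  linarith

variable {V : Type*} [NormedAddCommGroup V] [InnerProductSpace ℝ V]

theorem bochnerRieszSuperposition_norm_eq_integral (β : ℝ) {N : ℕ} (hN : N ≠ 0) (s : ℝ) (ξ : V) :
    (bochnerRieszSuperposition β N s ‖ξ‖ : ℂ) =
      ∫ w in Set.Ioi (0 : ℝ),
        (w ^ (s - 1) * Real.exp (-w ^ β)) • bochnerRieszMultiplier N (w⁻¹ • ξ) := by
  have hnorm {w : ℝ} (hw : 0 < w) : ‖w⁻¹ • ξ‖ = ‖ξ‖ / w := by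
    rw [norm_smul, norm_inv, Real.norm_of_nonneg hw.le, inv_mul_eq_div]
  rw [bochnerRieszSuperposition, ← integral_complex_ofReal]
  rw [setIntegral_eq_of_subset_of_forall_sdiff_eq_zero measurableSet_Ioi
    (Set.Ioi_subset_Ioi (norm_nonneg ξ))]
  · refine setIntegral_congr_fun measurableSet_Ioi fun w (hw : ‖ξ‖ < w) => ?_
    have hw0 : 0 < w := (norm_nonneg ξ).trans_lt hw
    have hle : ‖w⁻¹ • ξ‖ ≤ 1 := by rw [hnorm hw0]; exact (div_le_one hw0).2 hw.le
    rw [bochnerRieszMultiplier_of_norm_le_one N hle, hnorm hw0, real_smul, mul_comm]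
    exact ofReal_mul ..
  · rintro w ⟨hw : 0 < w, hwξ⟩
    rw [bochnerRieszMultiplier_of_one_le_norm hN, smul_zero]
    rw [hnorm hw]
    exact (one_le_div hw).2 (not_lt.1 hwξ)

variable [FiniteDimensional ℝ V] [MeasurableSpace V] [BorelSpace V] {θ : ℝ}

theorem hasFourierDecay_bochnerRieszSuperposition_succ {k : ℕ} (hβ : 0 < β) (hs : 0 < s)
    (hθ : 0 ≤ θ) (hθk : θ ≤ k) (hθs : θ < Module.finrank ℝ V + s) :
    HasFourierDecay θ fun ξ : V => (bochnerRieszSuperposition β (k + 1) s ‖ξ‖ : ℂ) := by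
  have hsmooth := contDiff_bochnerRieszMultiplier (V := V) k
  have hweight {a : ℝ} (ha : 0 < a + s) : IntegrableOn
      (fun w : ℝ => w ^ a * (w ^ (s - 1) * Real.exp (-w ^ β))) (Set.Ioi 0) := by
    refine (integrableOn_rpow_sub_one_mul_exp_neg_rpow hβ ha).congr_fun (fun w hw => ?_)
      measurableSet_Ioi
    rw [← mul_assoc, ← Real.rpow_add hw, add_sub_assoc]
  simp only [bochnerRieszSuperposition_norm_eq_integral β k.succ_ne_zero s]
  refine HasFourierDecay.integral_comp_inv_smul
    (.of_contDiff_hasCompactSupport hsmooth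
      (hasCompactSupport_bochnerRieszMultiplier k.succ_ne_zero) hθ hθk)
    hsmooth.continuous.stronglyMeasurable ?_ (hweight (by linarith))
  simpa using hweight (a := Module.finrank ℝ V) (by positivity)

theorem hasFourierDecay_bochnerRieszSuperposition (hβ : 0 < β) (N : ℕ) (hs : 0 < s)
    (hθ : 0 ≤ θ) (hθs : θ < Module.finrank ℝ V + s) :
    HasFourierDecay θ fun ξ : V => (bochnerRieszSuperposition β N s ‖ξ‖ : ℂ) := by
  obtain ⟨k, hθk, hNk⟩ : ∃ k : ℕ, θ ≤ k ∧ N ≤ k + 1 :=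
    ⟨max ⌈θ⌉₊ N, (Nat.le_ceil θ).trans (by simp), by omega⟩
  induction hNk using Nat.decreasingInduction generalizing s with
  | self => exact hasFourierDecay_bochnerRieszSuperposition_succ hβ hs hθ hθk hθs
  | of_succ N _ ih =>
    convert! ((ih hs hθs).const_smul ((1 - s / (2 * (N + 1)) : ℝ) : ℂ)).add
      ((ih (add_pos hs hβ) (by linarith)).const_smul ((β / (2 * (N + 1)) : ℝ) : ℂ)) with ξ
    rw [bochnerRieszSuperposition_eq_succ hβ N hs (norm_nonneg ξ)]
    simp

theorem hasFourierDecay_norm_rpow_mul_exp_neg {ν : ℝ} (hβ : 0 < β) (hν : 0 ≤ ν) (hθ : 0 ≤ θ)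
    (hθβ : θ < Module.finrank ℝ V + (ν + β)) (hθν : ν ≠ 0 → θ < Module.finrank ℝ V + ν) :
    HasFourierDecay θ fun ξ : V => ((‖ξ‖ ^ ν * Real.exp (-‖ξ‖ ^ β) : ℝ) : ℂ) := by
  have hmain := (hasFourierDecay_bochnerRieszSuperposition (V := V) hβ 0 (by linarith : 0 < ν + β)
    hθ hθβ).const_smul (β : ℂ)
  rcases hν.eq_or_lt with rfl | hν0
  · convert! hmain with ξ
    rw [rpow_mul_exp_neg_rpow_eq_bochnerRieszSuperposition hβ hν (norm_nonneg ξ)]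
    simp
  · convert! ((hasFourierDecay_bochnerRieszSuperposition (V := V) hβ 0 hν0 hθ
      (hθν hν0.ne')).const_smul (-ν : ℂ)).add hmain with ξ
    rw [rpow_mul_exp_neg_rpow_eq_bochnerRieszSuperposition hβ hν (norm_nonneg ξ)]
    simp

end Superposition

section HeatKernel

theorem eLpNorm_comp_smul {V E : Type*} [NormedAddCommGroup V] [NormedSpace ℝ V]
    [FiniteDimensional ℝ V] [MeasurableSpace V] [BorelSpace V] {μ : Measure V}
    [μ.IsAddHaarMeasure] [NormedAddCommGroup E] (g : V → E) {a m : ℝ} (ha : a ≠ 0) (hm : 0 < m) :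
    eLpNorm (fun x => g (a • x)) (ENNReal.ofReal m) μ =
      ENNReal.ofReal (|(a ^ Module.finrank ℝ V)⁻¹| ^ (1 / m)) *
        eLpNorm g (ENNReal.ofReal m) μ := by
  have hmap : eLpNorm (fun x => g (a • x)) (ENNReal.ofReal m) μ =
      eLpNorm g (ENNReal.ofReal m) (μ.map (a • ·)) :=
    ((Homeomorph.smulOfNeZero a ha).measurableEmbedding.eLpNorm_map_measure).symm
  rw [hmap, Measure.map_addHaar_smul μ ha, eLpNorm_smul_measure_of_ne_zero (by simp [ha]),
    smul_eq_mul, ← ENNReal.ofReal_rpow_of_nonneg (abs_nonneg _) (by positivity)]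
  simp [hm.le]

variable {n : ℕ} {α ν : ℝ}

theorem stronglyMeasurable_heatKernel (n : ℕ) (α ν : ℝ) :
    StronglyMeasurable (Function.uncurry (heatKernel n α ν)) := by
  have hmeas : Measurable fun z : (ℝ × Rn n) × Rn n => 𝐞 (inner ℝ z.2 z.1.2) •
      ((‖z.2‖ ^ ν * Real.exp (-(z.1.1 * ‖z.2‖ ^ (2 * α))) : ℝ) : ℂ) := by
    simp only [Circle.smul_def]
    fun_prop
  convert! hmeas.stronglyMeasurable.integral_prod_right' (ν := volume) with z
  exact Real.fourierInv_eq _ _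

theorem heatKernel_eq_smul (hα : α ≠ 0) {t : ℝ} (ht : 0 < t) (x : Rn n) :
    heatKernel n α ν t x = t ^ (-(ν / (2 * α)) - n / (2 * α)) •
      heatKernel n α ν 1 (t ^ (-(1 / (2 * α))) • x) := by
  set a : ℝ := t ^ (-(1 / (2 * α)))
  have ha : 0 < a := by positivity
  have hpow (p : ℝ) : a ^ p = t ^ (-(p / (2 * α))) := by
    rw [← Real.rpow_mul ht.le]; ring_nf
  have hsymbol (ξ : Rn n) : ‖ξ‖ ^ ν * Real.exp (-(t * ‖ξ‖ ^ (2 * α))) =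
      a ^ ν * (‖a⁻¹ • ξ‖ ^ ν * Real.exp (-(1 * ‖a⁻¹ • ξ‖ ^ (2 * α)))) := by
    rw [norm_smul, norm_inv, Real.norm_of_nonneg ha.le,
      Real.mul_rpow (by positivity) (norm_nonneg ξ),
      Real.mul_rpow (by positivity) (norm_nonneg ξ), Real.inv_rpow ha.le, Real.inv_rpow ha.le,
      hpow (2 * α), div_self (by simpa using hα), Real.rpow_neg ht.le, Real.rpow_one, inv_inv,
      one_mul, ← mul_assoc, mul_inv_cancel_left₀ (by positivity)]
  have hsmul : 𝓕⁻ (fun ξ : Rn n => ((‖ξ‖ ^ ν * Real.exp (-(t * ‖ξ‖ ^ (2 * α))) : ℝ) : ℂ)) x =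
      a ^ ν • 𝓕⁻ (fun ξ : Rn n =>
        ((‖a⁻¹ • ξ‖ ^ ν * Real.exp (-(1 * ‖a⁻¹ • ξ‖ ^ (2 * α))) : ℝ) : ℂ)) x := by
    simp only [hsymbol, ofReal_mul (a ^ ν)]
    exact congrFun (fourierInv_const_smul ((a ^ ν : ℝ) : ℂ) _) x
  have hdilate := fourierInv_comp_inv_smul
    (fun ξ : Rn n => ((‖ξ‖ ^ ν * Real.exp (-(1 * ‖ξ‖ ^ (2 * α))) : ℝ) : ℂ)) ha.ne' x
  rw [heatKernel, hsmul, hdilate, ← heatKernel, smul_smul, finrank_euclideanSpace_fin,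
    abs_of_pos (by positivity), ← Real.rpow_natCast, hpow, hpow, ← Real.rpow_add ht,
    ← sub_eq_add_neg]

theorem memLp_heatKernel_one (hα : 0 < α) (hν : 0 ≤ ν) {m : ℝ} (hm : 1 ≤ m) :
    MemLp (heatKernel n α ν 1) (ENNReal.ofReal m) := by
  have hfinrank := finrank_euclideanSpace_fin (𝕜 := ℝ) (n := n)
  obtain ⟨θ, hnθ, hθα, hθν⟩ : ∃ θ : ℝ, n < θ ∧ θ < n + (ν + 2 * α) ∧ (ν ≠ 0 → θ < n + ν) := by
    rcases hν.eq_or_lt with rfl | hν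
    · exact ⟨n + α, by linarith, by linarith, by simp⟩
    · exact ⟨n + ν / 2, by linarith, by linarith, fun _ => by linarith⟩
  unfold heatKernel
  simp only [one_mul]
  have hθ : 0 ≤ θ := (Nat.cast_nonneg n).trans hnθ.le
  refine (hasFourierDecay_norm_rpow_mul_exp_neg (by positivity) hν hθ ?_ ?_).memLp_fourierInv ?_ hm
  <;> simpa

theorem eLpNorm_heatKernel (hα : α ≠ 0) {m t : ℝ} (hm : 0 < m) (ht : 0 < t) :
    eLpNorm (heatKernel n α ν t) (ENNReal.ofReal m) =
      ENNReal.ofReal (t ^ (-(ν / (2 * α) + n / (2 * α) * (1 - 1 / m)))) *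
        eLpNorm (heatKernel n α ν 1) (ENNReal.ofReal m) := by
  have hscale : heatKernel n α ν t = t ^ (-(ν / (2 * α)) - n / (2 * α)) •
      fun x => heatKernel n α ν 1 (t ^ (-(1 / (2 * α))) • x) :=
    funext (heatKernel_eq_smul hα ht)
  rw [hscale, eLpNorm_const_smul, eLpNorm_comp_smul _ (by positivity) hm, ← mul_assoc,
    Real.enorm_of_nonneg (by positivity), ← ENNReal.ofReal_mul (by positivity),
    finrank_euclideanSpace_fin, abs_of_pos (by positivity), ← Real.rpow_natCast,
    ← Real.rpow_neg (by positivity), ← Real.rpow_mul ht.le, ← Real.rpow_mul ht.le,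
    ← Real.rpow_add ht]
  congr 3
  ring

theorem exists_eLpNorm_heatKernel_le (n : ℕ) (hα : 0 < α) (hν : 0 ≤ ν) {m : ℝ} (hm : 1 ≤ m) :
    ∃ A : ℝ, 0 < A ∧ ∀ t, 0 < t → eLpNorm (heatKernel n α ν t) (ENNReal.ofReal m) ≤
      ENNReal.ofReal A *
        ENNReal.ofReal (t ^ (-(ν / (2 * α) + n / (2 * α) * (1 - 1 / m)))) := by
  have hfin := (memLp_heatKernel_one (n := n) hα hν hm).eLpNorm_ne_top
  refine ⟨(eLpNorm (heatKernel n α ν 1) (ENNReal.ofReal m)).toReal + 1, by positivity,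
    fun t ht => ?_⟩
  rw [eLpNorm_heatKernel hα.ne' (by linarith) ht, mul_comm]
  gcongr
  exact (ENNReal.le_ofReal_iff_toReal_le hfin (by positivity)).2
    (le_add_of_nonneg_right zero_le_one)

end HeatKernel

section Duhamel

theorem mixedNorm_mono (n : ℕ) {t T γ : ℝ} (htT : t ≤ T) (hγ : 0 ≤ γ) (β : ℝ)
    (f : ℝ → Rn n → ℂ) : mixedNorm n t γ β f ≤ mixedNorm n T γ β f := by
  unfold mixedNorm
  gcongr

variable {α ν c r γ : ℝ}

theorem exists_eLpNorm_duhamel_le_lintegral (n : ℕ) (hα : 0 < α) (hν : 0 ≤ ν) (hc : 1 ≤ c)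
    (hcr : c ≤ r) :
    ∃ A : ℝ, 0 < A ∧ ∀ (t : ℝ) (f : ℝ → Rn n → ℂ),
      AEStronglyMeasurable (Function.uncurry f) ((volume.restrict (Set.Ico 0 t)).prod volume) →
      eLpNorm (fun x => ∫ s in Set.Ico 0 t, ∫ y, heatKernel n α ν (t - s) (x - y) * f s y)
          (ENNReal.ofReal r) ≤
        ENNReal.ofReal A * ∫⁻ s in Set.Ico 0 t,
          ENNReal.ofReal ((t - s) ^ (-(ν / (2 * α) + n / (2 * α) * (1 / c - 1 / r)))) *
            eLpNorm (f s) (ENNReal.ofReal c) := by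
  have hrc : 1 / r ≤ 1 / c := one_div_le_one_div_of_le (by linarith) hcr
  have hc1 : 1 / c ≤ 1 := (div_le_one (by linarith)).2 hc
  have hr1 : 0 < 1 / r := one_div_pos.2 (by linarith)
  obtain ⟨m, hcmr⟩ : ∃ m : ℝ, 1 / c + 1 / m = 1 + 1 / r :=
    ⟨1 / (1 + 1 / r - 1 / c), by rw [one_div_one_div, add_sub_cancel]⟩
  have hm0 : 0 < m := one_div_pos.1 (by linarith)
  have hm : 1 ≤ m := (div_le_one hm0).1 (by linarith)
  have hm' : 1 - 1 / m = 1 / c - 1 / r := by linarith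
  obtain ⟨A, hA, hkernel⟩ := exists_eLpNorm_heatKernel_le n hα hν hm
  rw [hm'] at hkernel
  refine ⟨A, hA, fun t f hf => ?_⟩
  have hshift : Measurable fun z : ℝ × Rn n => (t - z.1, z.2) := by fun_prop
  have hK : StronglyMeasurable (Function.uncurry fun s => heatKernel n α ν (t - s)) :=
    (stronglyMeasurable_heatKernel n α ν).comp_measurable hshift
  rw [← lintegral_const_mul' _ _ ENNReal.ofReal_ne_top]
  refine (eLpNorm_integral_convolution_le hc hm (hc.trans hcr) hcmr hK hf).trans
    (setLIntegral_mono' measurableSet_Ico fun s hs => ?_)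
  grw [hkernel _ (sub_pos.2 hs.2), mul_assoc]

theorem exists_eLpNorm_duhamel_le (n : ℕ) (hα : 0 < α) (hν : 0 ≤ ν) (hc : 1 ≤ c)
    (hcr : c ≤ r) (hγ : 0 < γ)
    (hκ : 0 < 1 - 1 / γ - (ν / (2 * α) + n / (2 * α) * (1 / c - 1 / r))) :
    ∃ C : ℝ, 0 < C ∧ ∀ (T : ℝ) (f : ℝ → Rn n → ℂ),
      AEStronglyMeasurable (Function.uncurry f) (volume.prod volume) →
      ∀ t ∈ Set.Ico 0 T,
        eLpNorm (fun x => ∫ s in Set.Ico 0 t, ∫ y, heatKernel n α ν (t - s) (x - y) * f s y)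
            (ENNReal.ofReal r) ≤
          ENNReal.ofReal
              (C * T ^ (1 - 1 / γ - (ν / (2 * α) + n / (2 * α) * (1 / c - 1 / r)))) *
            mixedNorm n T γ c f := by
  have hrc : 0 ≤ 1 / c - 1 / r := sub_nonneg.2 (one_div_le_one_div_of_le (by linarith) hcr)
  have he : 0 ≤ ν / (2 * α) + n / (2 * α) * (1 / c - 1 / r) := by positivity
  have hγ1 : 1 < γ := (div_lt_one hγ).1 (by linarith)
  obtain ⟨A, hA, hspace⟩ := exists_eLpNorm_duhamel_le_lintegral n hα hν hc hcr
  obtain ⟨B, hB, htime⟩ := exists_lintegral_Ico_sub_rpow_mul_le hγ1 hκ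
  refine ⟨A * B, by positivity, fun T f hf t ht => ?_⟩
  have hft : AEStronglyMeasurable (Function.uncurry f)
      ((volume.restrict (Set.Ico 0 t)).prod volume) :=
    hf.mono_ac (Measure.restrict_le_self.absolutelyContinuous.prod .rfl)
  have hF : AEMeasurable (fun s => eLpNorm (f s) (ENNReal.ofReal c))
      (volume.restrict (Set.Ico 0 t)) := by
    simp only [eLpNorm_ofReal_eq_lintegral _ (by linarith : 0 < c)]
    exact (hft.enorm.pow_const c).lintegral_prod_right'.pow_const _
  have ht0 : 0 ≤ t := ht.1
  grw [hspace t f hft, htime t ht.1 _ hF, ← mixedNorm, mixedNorm_mono n ht.2.le hγ.le c f,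
    ← mul_assoc, ← ENNReal.ofReal_mul hA.le, ← mul_assoc, ht.2.le]

theorem fractional_heat_strichartz_general (n : ℕ) {α ν b q p r : ℝ} (hα : 0 < α) (hν : 0 ≤ ν)
    (hb : 0 < b) (hq : 0 < q) (hadm : 1 / q = n / (2 * α) * (1 / r - 1 / p))
    (hpb : b + 1 ≤ p) (hpr : p ≤ r * (b + 1)) (hexp : ν / (2 * α) + n * b / (2 * r * α) < 1) :
    ∃ C : ℝ, 0 < C ∧ ∀ (T : ℝ) (f : ℝ → Rn n → ℂ),
      AEStronglyMeasurable (Function.uncurry f) (volume.prod volume) →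
      ∀ t ∈ Set.Ico 0 T,
        eLpNorm (fun x => ∫ s in Set.Ico 0 t, ∫ y, heatKernel n α ν (t - s) (x - y) * f s y)
            (ENNReal.ofReal r) ≤
          ENNReal.ofReal (C * T ^ (1 - n * b / (2 * r * α) - ν / (2 * α))) *
            mixedNorm n T (q / (b + 1)) (p / (b + 1)) f := by
  have hb1 : 0 < b + 1 := by linarith
  have hp : 0 < p := by linarith
  have hr : 0 < r := pos_of_mul_pos_left (hp.trans_le hpr) hb1.le
  have hκ : 1 - 1 / (q / (b + 1)) -
        (ν / (2 * α) + n / (2 * α) * (1 / (p / (b + 1)) - 1 / r)) =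
      1 - n * b / (2 * r * α) - ν / (2 * α) := by
    rw [one_div_div, div_eq_mul_one_div, hadm]
    field_simp
    ring
  rw [← hκ]
  exact exists_eLpNorm_duhamel_le n hα hν ((one_le_div hb1).2 hpb) ((div_le_iff₀ hb1).2 hpr)
    (by positivity) (by rw [hκ]; linarith)

end Duhamel

/-- **Strichartz-type estimate for the fractional heat semigroup** (Lemma A.4): for an
admissible triplet `(q,p,r)` and parameters `b, ν` as stated,
`‖∫₀ᵗ (−Δ)^{ν/2} S_α(t−s) f(s) ds‖_{L^∞([0,T); L^r)} ≤ C T^{1 − nb/(2rα) − ν/(2α)}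
‖f‖_{L^{q/(b+1)}([0,T); L^{p/(b+1)})}`. -/
theorem fractional_heat_strichartz (n : ℕ) (hn : 1 ≤ n) (α ν b T : ℝ)
    (hα : 0 < α) (hν : 0 ≤ ν) (hb : 0 < b) (hT : 0 < T) (q p r : ℝ)
    (hadm : 1 / q = ((n : ℝ) / (2 * α)) * (1 / r - 1 / p))
    (hr1 : 1 < r) (hrp : r ≤ p)
    (hsub : (n : ℝ) > 2 * α → p < (n : ℝ) * r / ((n : ℝ) - 2 * α))
    (hpb : b + 1 < p) (hpr : p < r * (b + 1))
    (hr0 : (n : ℝ) * b / (2 * α) ≤ r) (hr0' : 1 < (n : ℝ) * b / (2 * α))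
    (hq : b + 1 < q) (hexp : ν / (2 * α) + (n : ℝ) * b / (2 * r * α) < 1) :
    ∃ C : ℝ, 0 < C ∧ ∀ f : ℝ → Rn n → ℂ,
      AEStronglyMeasurable (Function.uncurry f) ((volume : Measure ℝ).prod volume) →
      mixedNorm n T (q / (b + 1)) (p / (b + 1)) f ≠ ⊤ →
      ∀ t ∈ Set.Ico (0 : ℝ) T,
        eLpNorm
            (fun x : Rn n =>
              ∫ s in Set.Ico (0 : ℝ) t, ∫ y : Rn n, heatKernel n α ν (t - s) (x - y) * f s y)
            (ENNReal.ofReal r) volume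
          ≤ ENNReal.ofReal (C * T ^ (1 - (n : ℝ) * b / (2 * r * α) - ν / (2 * α))) *
              mixedNorm n T (q / (b + 1)) (p / (b + 1)) f := by
  obtain ⟨C, hC, hbound⟩ := fractional_heat_strichartz_general n hα hν hb (by linarith) hadm
    hpb.le hpr.le hexp
  exact ⟨C, hC, fun f hf _ t ht => hbound T f hf t ht⟩
end
end
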